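/- (Simultaneous resolution.) Terminology. A function $k$ on $[0,a]$ is called $N$-Puiseux if $x\mapsto k(x^N)$ is real analytic on (a neighborhood of) $[0,a^{1/N}]$, and $k(x)=lx^s+\cdots$ means $k(x)=lx^s+o(x^s)$ as $x\to0^+$. A real-analytic function $F$ is *$\eta$-comparable* to the monomial $d\,x^{\alpha}y^{\beta}$ on $D$ ($d\ne0$, $\alpha\ge 0$ rational, $\beta\ge 0$ an integer) if for all integers $0\le l\le\alpha$, $0\le m\le\beta$ one has on $D$ $$|\partial_x^l\partial_y^mF-\alpha\cdots(\alpha-l+1)\,\beta\cdots(\beta-m+1)\,d\,x^{\alpha-l}y^{\beta-m}|\le\eta|d|x^{\alpha-l}y^{\beta-m}.$$ A *resolution of $P$ on $\{0\le y\le bx\}$ with error $\eta$* consists of $a>0$, an integer $N\ge1$ and finitely many domains $D_i'=\{0<x<a,\ g_i(x)<y<G_i(x)\}$ and maps $\eta_i(x,y)=(x,\pm y+k_i(x))$ with $k_i,g_i,G_i$ $N$-Puiseux, $k_i(x)=l_ix^{s_i}+\cdots$, $s_i\ge1$, $G_i(x)=H_ix^{M_i}+\cdots$, $H_i>0$, $M_i\ge1$,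 such that $\{0\le x\le a,\ 0\le y\le bx\}=\bigcup_i\overline{\eta_i(D_i')}$, such that $P\circ\eta_i$ is $\eta$-comparable to some $d_ix^{\alpha_i}y^{\beta_i}$ on $D_i'$, and such that $g_i\equiv0$ and $G_i(x)=H_ix^{M_i}$ if $\beta_i=0$, while if $\beta_i>0$ either $g_i\equiv0$ or $g_i(x)=h_ix^{m_i}+\cdots$ with $h_i>0$, $m_i>M_i$. Theorem. Suppose $S_1,\dots,S_k$ are real analytic on a neighborhood of the origin in $\mathbb R^2$, none identically zero near the origin, with $S_j(0,0)=0$ for each $j$. Let $b>0$, $0<\eta<1$, and let $D_i',\eta_i,\alpha_i,\beta_i$ be a resolution of $\prod_{j=1}^kS_j$ on $\{0\le y\le bx\}$ with error $\eta$. Then for every $\eta'>0$ there is $a_0\in(0,a]$ such that for each $i$ the set $D_i'\cap\{x<a_0\}$ can be divided into finitely many pairwise disjoint pieces, whose closures cover it, with the following property. Each piece is carried by a coordinate change $(x,y)\to(x,y-c_{il}x^{M_i})$ or (only if $g_i\not\equiv0$) $(x,y)\to(x,y-c_{il}x^{m_i})$, $c_{il}\ge0$, onto a domain $D_{il}'=\{0<x<a_0,\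 g_{il}(x)<y<G_{il}(x)\}$ with $g_{il},G_{il}$ $N$-Puiseux, $G_{il}(x)=H_{il}x^{M_{il}}+\cdots$, $g_{il}(x)=h_{il}x^{m_{il}}+\cdots$, $1\le M_{il}<m_{il}$, $h_{il}\ge0$, $H_{il}>0$, on which every $S_j$, written in the new coordinates, i.e. $(x,y)\mapsto S_j(\eta_i(x,y+c_{il}x^{M_i}))$, respectively $S_j(\eta_i(x,y+c_{il}x^{m_i}))$, is $\eta'$-comparable to some monomial $d_{ilj}x^{\alpha_{ilj}}y^{\beta_{ilj}}$. Moreover $g_{il}\equiv0$ or $h_{il}>0$ whenever some $\beta_{ilj}>0$, or $g_i\equiv0$, or $g_i(x)\ge h_ix^{m_i}$ for all small $x>0$. -/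

import Mathlib

open Set Filter
open scoped Topology

noncomputable section

/-- `k(x^N)` is real analytic: there is a function `K`, real analytic at every point `t` of the
closed interval given by `0 ≤ t`, `t^N ≤ a`, with `k(t^N) = K(t)` on that interval. -/
def PuiseuxOn (N : ℕ) (a : ℝ) (k : ℝ → ℝ) : Prop :=
  ∃ K : ℝ → ℝ, AnalyticOnNhd ℝ K {t : ℝ | 0 ≤ t ∧ t ^ N ≤ a} ∧
    ∀ t : ℝ, 0 ≤ t → t ^ N ≤ a → k (t ^ N) = K t

/-- `k(x) = l x^s + higher order terms` as `x → 0⁺`, that is, `k(x) = l x^s + o(x^s)`. -/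
def LeadingTerm (k : ℝ → ℝ) (l s : ℝ) : Prop :=
  Tendsto (fun x => k x / x ^ s) (𝓝[>] (0 : ℝ)) (𝓝 l)

/-- The mixed partial derivative `∂_x^l ∂_y^m F`. -/
def pderiv2 (l m : ℕ) (F : ℝ × ℝ → ℝ) (p : ℝ × ℝ) : ℝ :=
  iteratedDeriv l (fun x => iteratedDeriv m (fun y => F (x, y)) p.2) p.1

/-- The descending product `α (α - 1) ⋯ (α - l + 1)`. -/
def descProd (α : ℝ) (l : ℕ) : ℝ := ∏ j ∈ Finset.range l, (α - (j : ℝ))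

/-- The domain `{(x,y) : 0 < x < a, g(x) < y < G(x)}`. -/
def sliverSet (a : ℝ) (g G : ℝ → ℝ) : Set (ℝ × ℝ) :=
  {q : ℝ × ℝ | 0 < q.1 ∧ q.1 < a ∧ g q.1 < q.2 ∧ q.2 < G q.1}

/-- The closed triangle `{(x,y) : 0 ≤ x ≤ a, 0 ≤ y ≤ b x}`. -/
def closedTriangle (a b : ℝ) : Set (ℝ × ℝ) :=
  {q : ℝ × ℝ | 0 ≤ q.1 ∧ q.1 ≤ a ∧ 0 ≤ q.2 ∧ q.2 ≤ b * q.1}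

/-- The map `(x,y) ↦ (x, σ y + k(x))`. -/
def shear (σ : ℝ) (k : ℝ → ℝ) (q : ℝ × ℝ) : ℝ × ℝ := (q.1, σ * q.2 + k q.1)

/-- On `D` the function `F` is real analytic and agrees with the monomial `d x^α y^β` up to the
relative error `η`, together with all derivatives `∂_x^l ∂_y^m`, `0 ≤ l ≤ α`, `0 ≤ m ≤ β`. -/
def MonomialOn (F : ℝ × ℝ → ℝ) (D : Set (ℝ × ℝ)) (α : ℚ) (β : ℕ) (d η : ℝ) : Prop :=
  ∀ p ∈ D, AnalyticAt ℝ F p ∧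
    ∀ l : ℕ, (l : ℚ) ≤ α → ∀ m : ℕ, m ≤ β →
      |pderiv2 l m F p -
          descProd (α : ℝ) l * descProd (β : ℝ) m * d * p.1 ^ ((α : ℝ) - l) * p.2 ^ (β - m)| ≤
        η * |d| * p.1 ^ ((α : ℝ) - l) * p.2 ^ (β - m)

/-- A resolution of singularities of `P` on the triangle below the line `y = b x`, with relative
error `η`: a number `a > 0`, an integer `N ≥ 1` and finitely many domains
`D i = {0 < x < a, g i x < y < G i x}` whose images under the coordinate changes
`(x,y) ↦ (x, σ i * y + k i x)` have closures that fill up `{0 ≤ x ≤ a, 0 ≤ y ≤ b x}`, and such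
that `P` becomes comparable to the monomial `d i * x ^ α i * y ^ β i` on `D i`. -/
structure TriangleResolution (P : ℝ × ℝ → ℝ) (b η : ℝ) where
  a : ℝ
  a_pos : 0 < a
  N : ℕ
  N_pos : 0 < N
  n : ℕ
  σ : Fin n → ℝ
  σ_sign : ∀ i, σ i = 1 ∨ σ i = -1
  k : Fin n → ℝ → ℝ
  k_puiseux : ∀ i, PuiseuxOn N a (k i)
  k_order : ∀ i, ∃ l s : ℝ, 1 ≤ s ∧ LeadingTerm (k i) l s
  g : Fin n → ℝ → ℝ
  G : Fin n → ℝ → ℝ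
  g_puiseux : ∀ i, PuiseuxOn N a (g i)
  G_puiseux : ∀ i, PuiseuxOn N a (G i)
  H : Fin n → ℝ
  M : Fin n → ℝ
  H_pos : ∀ i, 0 < H i
  one_le_M : ∀ i, 1 ≤ M i
  G_lead : ∀ i, LeadingTerm (G i) (H i) (M i)
  /-- The coefficient `h i` and the exponent `m i` of the leading term of `g i`; they are
  meaningful only where `g i` is not identically zero. -/
  h : Fin n → ℝ
  m : Fin n → ℝ
  α : Fin n → ℚ
  β : Fin n → ℕ
  d : Fin n → ℝ
  α_nonneg : ∀ i, 0 ≤ α i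
  d_ne : ∀ i, d i ≠ 0
  G_of_zero : ∀ i, β i = 0 → ∀ x ∈ Ioo 0 a, G i x = H i * x ^ M i
  g_of_zero : ∀ i, β i = 0 → ∀ x ∈ Ioo 0 a, g i x = 0
  g_of_pos : ∀ i, 0 < β i → (∀ x ∈ Ioo 0 a, g i x = 0) ∨
    (0 < h i ∧ M i < m i ∧ LeadingTerm (g i) (h i) (m i))
  cover : closedTriangle a b = ⋃ i, closure (shear (σ i) (k i) '' sliverSet a (g i) (G i))
  monomial : ∀ i,
    MonomialOn (fun q => P (shear (σ i) (k i) q)) (sliverSet a (g i) (G i)) (α i) (β i) (d i) η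

end

/-!
Fix `i` and write every `S j`, in the coordinates `(t, y)` of the `i`-th domain with `x = t^N`, as
a power series in `y`. Along the curves `y = u x^M` with `0 < u < H`, and `y = u x^m` with `u > h`
when `g` does not vanish, the product of the `S j` is comparable to a monomial. Since lowest-order
parts are multiplicative, the face polynomials of the Newton polygons of the single factors then
have no zeros at these `u`, and comparing their orders of vanishing at `0` and their degrees shows
that in each Newton polygon the lowest vertex of the face of weight `M` is the highest vertex of
the face of weight `m`.

Near a curve `y = c x^e` with `e = M` or `e = m`, every `S j` is therefore a power of `x` times a
nonvanishing analytic function of `x^(1/N)` and `y / x^e - c`; between the curves of weight `M` and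
those of weight `m` it is the monomial of the common vertex times a nonvanishing analytic function
of `x^(1/N)`, `y / x^M` and `x^m / y`. The operators `x ∂_x` and `y ∂_y` act on such functions by
analytic linear vector fields in these variables, so that near the origin the derivatives are close
to those of the monomial. By compactness of the range of `c` finitely many pieces suffice.
-/

/-! ### Division by the second variable -/

section Average

variable {E F : Type*} [NormedAddCommGroup E] [NormedSpace ℝ E] [NormedAddCommGroup F]
  [NormedSpace ℝ F] {Λ : ℝ → E →L[ℝ] E}

/-- The termwise average `∫₀¹ p ∘ Λ s ds` of a power series over a path `Λ` of linear
substitutions; it is the power series of the average of the sum of `p`. -/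
noncomputable def averagedSeries (Λ : ℝ → E →L[ℝ] E) (p : FormalMultilinearSeries ℝ E F) :
    FormalMultilinearSeries ℝ E F :=
  fun k => ∫ s in (0 : ℝ)..1, (p k).compContinuousLinearMap fun _ => Λ s

lemma continuous_compContinuousLinearMap_path {k : ℕ} (hΛ : Continuous Λ)
    (f : ContinuousMultilinearMap ℝ (fun _ : Fin k => E) F) :
    Continuous fun s => f.compContinuousLinearMap fun _ => Λ s :=
  ((ContinuousMultilinearMap.compContinuousLinearMapContinuousMultilinear ℝ
    (fun _ : Fin k => E) (fun _ : Fin k => E) F).cont.comp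
      (continuous_pi fun _ => hΛ)).clm_apply continuous_const

lemma averagedSeries_apply [CompleteSpace F] (hΛ : Continuous Λ)
    (p : FormalMultilinearSeries ℝ E F) (k : ℕ) (z : E) :
    averagedSeries Λ p k (fun _ => z) = ∫ s in (0 : ℝ)..1, p k (fun _ => Λ s z) :=
  ((ContinuousMultilinearMap.apply ℝ (fun _ : Fin k => E) F
    (fun _ => z)).intervalIntegral_comp_comm
      ((continuous_compContinuousLinearMap_path hΛ (p k)).intervalIntegrable 0 1)).symm

lemma norm_averagedSeries_le (hΛ1 : ∀ s ∈ Icc (0 : ℝ) 1, ‖Λ s‖ ≤ 1)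
    (p : FormalMultilinearSeries ℝ E F) (k : ℕ) : ‖averagedSeries Λ p k‖ ≤ ‖p k‖ := by
  have hterm : ∀ s ∈ uIoc (0 : ℝ) 1, ‖(p k).compContinuousLinearMap fun _ => Λ s‖ ≤ ‖p k‖ := by
    intro s hs
    rw [uIoc_of_le zero_le_one] at hs
    exact (ContinuousMultilinearMap.norm_compContinuousLinearMap_le _ _).trans
      (mul_le_of_le_one_right (norm_nonneg _) (Finset.prod_le_one (fun _ _ => norm_nonneg _)
        fun _ _ => hΛ1 s ⟨hs.1.le, hs.2⟩))
  simpa [averagedSeries] using intervalIntegral.norm_integral_le_of_norm_le_const hterm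

lemma hasFPowerSeriesOnBall_average [CompleteSpace F] (hΛ : Continuous Λ)
    (hΛ1 : ∀ s ∈ Icc (0 : ℝ) 1, ‖Λ s‖ ≤ 1) {φ : E → F} {p : FormalMultilinearSeries ℝ E F}
    {r : ENNReal} (hp : HasFPowerSeriesOnBall φ p 0 r) :
    HasFPowerSeriesOnBall (fun z => ∫ s in (0 : ℝ)..1, φ (Λ s z)) (averagedSeries Λ p) 0 r := by
  have hnorm : ∀ s ∈ uIoc (0 : ℝ) 1, ∀ z, ‖Λ s z‖ ≤ ‖z‖ := fun s hs z => by
    rw [uIoc_of_le zero_le_one] at hs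
    exact (Λ s).le_of_opNorm_le_of_le (hΛ1 s ⟨hs.1.le, hs.2⟩) le_rfl |>.trans_eq (one_mul _)
  refine ⟨hp.r_le.trans (FormalMultilinearSeries.radius_le_of_le fun k =>
    norm_averagedSeries_le hΛ1 p k), hp.r_pos, fun {z} hz => ?_⟩
  have hz' : ∀ s ∈ uIoc (0 : ℝ) 1, Λ s z ∈ Metric.eball (0 : E) r := fun s hs => by
    rw [Metric.mem_eball, edist_zero_right] at hz ⊢
    exact (enorm_le_iff_norm_le.2 (hnorm s hs z)).trans_lt hz
  simp only [zero_add, averagedSeries_apply hΛ]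
  refine intervalIntegral.hasSum_integral_of_dominated_convergence
    (fun k _ => ‖p k‖ * ‖z‖ ^ k) (fun k => ?_) (fun k => ?_) ?_ (by simp) ?_
  · exact ((p k).cont.comp (continuous_pi fun _ =>
      hΛ.clm_apply continuous_const)).aestronglyMeasurable
  · refine Eventually.of_forall fun s hs => ((p k).le_opNorm _).trans ?_
    simp only [Finset.prod_const, Finset.card_univ, Fintype.card_fin]
    gcongr
    exact hnorm s hs z
  · refine Eventually.of_forall fun s _ => ?_
    rw [Metric.mem_eball, edist_zero_right] at hz
    exact p.summable_norm_mul_pow (r := ‖z‖₊) (hz.trans_le hp.r_le)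
  · exact Eventually.of_forall fun s hs => by simpa using hp.hasSum (hz' s hs)

end Average

/-- The linear map `(t, y) ↦ (t, s y)`. -/
noncomputable def scaleSnd (s : ℝ) : ℝ × ℝ →L[ℝ] ℝ × ℝ :=
  (ContinuousLinearMap.fst ℝ ℝ ℝ).prod (s • ContinuousLinearMap.snd ℝ ℝ ℝ)

lemma scaleSnd_apply (s : ℝ) (z : ℝ × ℝ) : scaleSnd s z = (z.1, s * z.2) := rfl

lemma continuous_scaleSnd : Continuous scaleSnd := by
  have h : scaleSnd = fun s : ℝ =>
      (ContinuousLinearMap.inl ℝ ℝ ℝ).comp (ContinuousLinearMap.fst ℝ ℝ ℝ) +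
        s • (ContinuousLinearMap.inr ℝ ℝ ℝ).comp (ContinuousLinearMap.snd ℝ ℝ ℝ) := by
    funext s
    ext <;> simp [scaleSnd_apply]
  rw [h]
  fun_prop

lemma norm_scaleSnd_apply_le {s : ℝ} (hs : s ∈ Icc (0 : ℝ) 1) (z : ℝ × ℝ) :
    ‖scaleSnd s z‖ ≤ ‖z‖ := by
  rw [scaleSnd_apply, Prod.norm_def, Prod.norm_def, norm_mul, Real.norm_of_nonneg hs.1]
  exact max_le_max le_rfl (mul_le_of_le_one_left (norm_nonneg _) hs.2)

lemma norm_scaleSnd_le {s : ℝ} (hs : s ∈ Icc (0 : ℝ) 1) : ‖scaleSnd s‖ ≤ 1 :=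
  ContinuousLinearMap.opNorm_le_bound _ zero_le_one fun z => by
    simpa using norm_scaleSnd_apply_le hs z

lemma sub_eq_mul_integral_fderiv_scaleSnd {Q : ℝ × ℝ → ℝ} {z : ℝ × ℝ}
    (hQ : ∀ s ∈ Icc (0 : ℝ) 1, AnalyticAt ℝ Q (scaleSnd s z)) :
    Q z - Q (z.1, 0) = z.2 * ∫ s in (0 : ℝ)..1, fderiv ℝ Q (scaleSnd s z) (0, 1) := by
  rw [← uIcc_of_le zero_le_one] at hQ
  have hder : ∀ s ∈ uIcc (0 : ℝ) 1, HasDerivAt (fun s => Q (scaleSnd s z))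
      (z.2 * fderiv ℝ Q (scaleSnd s z) (0, 1)) s := by
    intro s hs
    have hpath : HasDerivAt (fun s : ℝ => scaleSnd s z) (z.2 • ((0 : ℝ), (1 : ℝ))) s := by
      simpa [scaleSnd_apply] using (hasDerivAt_const s z.1).prodMk ((hasDerivAt_id s).mul_const z.2)
    have h := (hQ s hs).differentiableAt.hasFDerivAt.comp_hasDerivAt s hpath
    rwa [map_smul, smul_eq_mul] at h
  have hcont : ContinuousOn (fun s => z.2 * fderiv ℝ Q (scaleSnd s z) (0, 1)) (uIcc (0 : ℝ) 1) :=
    fun s hs => (continuousAt_const.mul <| ContinuousAt.clm_apply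
      (ContinuousAt.comp (f := fun s : ℝ => scaleSnd s z) (hQ s hs).fderiv.continuousAt
        (continuous_scaleSnd.clm_apply continuous_const).continuousAt)
      continuousAt_const).continuousWithinAt
  rw [← intervalIntegral.integral_const_mul,
    intervalIntegral.integral_eq_sub_of_hasDerivAt hder hcont.intervalIntegrable]
  simp [scaleSnd_apply]

lemma exists_analyticAt_eq_add_snd_mul {Q : ℝ × ℝ → ℝ} (hQ : AnalyticAt ℝ Q 0) :
    ∃ U : ℝ × ℝ → ℝ, AnalyticAt ℝ U 0 ∧
      ∀ᶠ z in 𝓝 (0 : ℝ × ℝ), Q z = Q (z.1, 0) + z.2 * U z := by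
  have hd : AnalyticAt ℝ (fun z => fderiv ℝ Q z (0, 1)) 0 :=
    (ContinuousLinearMap.apply ℝ ℝ ((0 : ℝ), (1 : ℝ))).analyticAt _ |>.comp hQ.fderiv
  obtain ⟨p, r, hp⟩ := hd
  refine ⟨_, (hasFPowerSeriesOnBall_average continuous_scaleSnd
    (fun _ => norm_scaleSnd_le) hp).analyticAt, ?_⟩
  obtain ⟨ε, hε, hA⟩ := Metric.eventually_nhds_iff.1 hQ.eventually_analyticAt
  refine Metric.eventually_nhds_iff.2 ⟨ε, hε, fun z hz => ?_⟩
  rw [← sub_eq_mul_integral_fderiv_scaleSnd fun s hs => hA ?_]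
  · ring
  · rw [dist_zero_right] at hz ⊢
    exact (norm_scaleSnd_apply_le hs z).trans_lt hz

lemma exists_analyticAt_eq_sum_add_snd_pow_mul {Q : ℝ × ℝ → ℝ} (hQ : AnalyticAt ℝ Q 0) (B : ℕ) :
    ∃ (c : ℕ → ℝ → ℝ) (U : ℝ × ℝ → ℝ), (∀ k, AnalyticAt ℝ (c k) 0) ∧ AnalyticAt ℝ U 0 ∧
      ∀ᶠ z in 𝓝 (0 : ℝ × ℝ), Q z = ∑ k ∈ Finset.range B, z.2 ^ k * c k z.1 + z.2 ^ B * U z := by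
  induction B generalizing Q with
  | zero => exact ⟨fun _ _ => 0, Q, fun _ => analyticAt_const, hQ, by simp⟩
  | succ B ih =>
    obtain ⟨V, hV, hQV⟩ := exists_analyticAt_eq_add_snd_mul hQ
    obtain ⟨c, U, hc, hU, hVU⟩ := ih hV
    have hQ₀ : AnalyticAt ℝ (fun t => Q (t, 0)) 0 :=
      AnalyticAt.comp (f := fun t : ℝ => (t, (0 : ℝ))) hQ (analyticAt_id.prod analyticAt_const)
    refine ⟨fun | 0 => fun t => Q (t, 0) | k + 1 => c k, U, fun | 0 => hQ₀ | k + 1 => hc k, hU, ?_⟩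
    filter_upwards [hQV, hVU] with z hQz hVz
    rw [hQz, hVz, Finset.sum_range_succ', mul_add, Finset.mul_sum]
    ring_nf

/-! ### Newton polygons -/

/-- An expansion of `Q` near the origin in powers of the second variable up to order `B`, in which
the nonzero coefficient functions are written as `t ^ o k * a k t` with `a k 0 ≠ 0`; the points
`(k, o k)` with `k ∈ s` determine the Newton polygon of `Q` as far as it is visible below the
order `B`. -/
structure NewtonExpansion (Q : ℝ × ℝ → ℝ) (B : ℕ) where
  s : Finset ℕ
  o : ℕ → ℕ
  a : ℕ → ℝ → ℝ
  U : ℝ × ℝ → ℝ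
  lt : ∀ k ∈ s, k < B
  analyticAt_a : ∀ k ∈ s, AnalyticAt ℝ (a k) 0
  a_ne : ∀ k ∈ s, a k 0 ≠ 0
  analyticAt_U : AnalyticAt ℝ U 0
  eq : ∀ᶠ z in 𝓝 (0 : ℝ × ℝ),
    Q z = ∑ k ∈ s, z.2 ^ k * (z.1 ^ o k * a k z.1) + z.2 ^ B * U z

lemma nonempty_newtonExpansion {Q : ℝ × ℝ → ℝ} (hQ : AnalyticAt ℝ Q 0) (B : ℕ) :
    Nonempty (NewtonExpansion Q B) := by
  classical
  obtain ⟨c, U, hc, hU, hQU⟩ := exists_analyticAt_eq_sum_add_snd_pow_mul hQ B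
  choose! o a h using fun k (hk : ¬ ∀ᶠ t in 𝓝 (0 : ℝ), c k t = 0) =>
    (hc k).exists_eventuallyEq_pow_smul_nonzero_iff.2 hk
  have hfst : Tendsto (Prod.fst : ℝ × ℝ → ℝ) (𝓝 0) (𝓝 0) := continuous_fst.tendsto' _ _ rfl
  have hcoeff : ∀ᶠ z in 𝓝 (0 : ℝ × ℝ), ∀ k ∈ Finset.range B,
      c k z.1 = if ¬ ∀ᶠ t in 𝓝 (0 : ℝ), c k t = 0 then z.1 ^ o k * a k z.1 else 0 := by
    refine (Finset.eventually_all _).2 fun k _ => ?_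
    by_cases hk : ∀ᶠ t in 𝓝 (0 : ℝ), c k t = 0
    · filter_upwards [hfst.eventually hk] with z hz
      rw [if_neg (not_not.2 hk), hz]
    · filter_upwards [hfst.eventually (h k hk).2.2] with z hz
      rw [if_pos hk, hz, sub_zero, smul_eq_mul]
  exact ⟨{
    s := (Finset.range B).filter fun k => ¬ ∀ᶠ t in 𝓝 (0 : ℝ), c k t = 0
    o := o
    a := a
    U := U
    lt := fun k hk => Finset.mem_range.1 (Finset.mem_filter.1 hk).1
    analyticAt_a := fun k hk => (h k (Finset.mem_filter.1 hk).2).1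
    a_ne := fun k hk => (h k (Finset.mem_filter.1 hk).2).2.1
    analyticAt_U := hU
    eq := by
      filter_upwards [hQU, hcoeff] with z hz hcz
      rw [hz, Finset.sum_filter]
      congr 1
      refine Finset.sum_congr rfl fun k hk => ?_
      rw [hcz k hk, mul_ite, mul_zero] }⟩

namespace NewtonExpansion

variable {Q : ℝ × ℝ → ℝ} {B : ℕ} (E : NewtonExpansion Q B)

/-- The set of points where the expansion of `Q` holds. -/
def domain : Set (ℝ × ℝ) :=
  {z | Q z = ∑ k ∈ E.s, z.2 ^ k * (z.1 ^ E.o k * E.a k z.1) + z.2 ^ B * E.U z}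

/-- The smallest value of the weight `o k + ν k` on the Newton polygon; by convention `0` if the
expansion has no terms. -/
noncomputable def minWeight (ν : ℕ) : ℕ := sInf ((fun k => E.o k + ν * k) '' E.s)

/-- The quasi-homogeneous part of `Q` of minimal weight, with `y` of weight `ν`, restricted
to `t = 1`. -/
noncomputable def face (ν : ℕ) : Polynomial ℝ :=
  ∑ k ∈ E.s with E.o k + ν * k = E.minWeight ν, Polynomial.monomial k (E.a k 0)

/-- The quotient of `Q(t, t^ν u)` by `t^A`, which makes sense at `t = 0` for `A` at most the
minimal weight. -/
noncomputable def quotient (ν A : ℕ) (z : ℝ × ℝ) : ℝ :=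
  ∑ k ∈ E.s, z.1 ^ (E.o k + ν * k - A) * z.2 ^ k * E.a k z.1 +
    z.1 ^ (ν * B - A) * z.2 ^ B * E.U (z.1, z.1 ^ ν * z.2)

lemma minWeight_le (ν : ℕ) {k : ℕ} (hk : k ∈ E.s) : E.minWeight ν ≤ E.o k + ν * k :=
  Nat.sInf_le (mem_image_of_mem _ hk)

lemma exists_eq_minWeight (ν : ℕ) (hs : E.s.Nonempty) :
    ∃ k ∈ E.s, E.o k + ν * k = E.minWeight ν :=
  Nat.sInf_mem (hs.to_set.image _)

lemma coeff_face (ν k : ℕ) :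
    (E.face ν).coeff k = if k ∈ E.s ∧ E.o k + ν * k = E.minWeight ν then E.a k 0 else 0 := by
  simp [face, Polynomial.finsetSum_coeff, Polynomial.coeff_monomial, Finset.sum_ite_eq']

lemma mem_of_coeff_face_ne_zero {ν k : ℕ} (h : (E.face ν).coeff k ≠ 0) :
    k ∈ E.s ∧ E.o k + ν * k = E.minWeight ν := by
  rw [coeff_face] at h
  by_contra h'
  exact h (if_neg h')

lemma face_ne_zero (ν : ℕ) (hs : E.s.Nonempty) : E.face ν ≠ 0 := by
  obtain ⟨k, hk, hkν⟩ := E.exists_eq_minWeight ν hs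
  intro h0
  have hcoeff := E.coeff_face ν k
  rw [h0, Polynomial.coeff_zero, if_pos ⟨hk, hkν⟩] at hcoeff
  exact E.a_ne k hk hcoeff.symm

lemma quotient_minWeight_zero {ν : ℕ} (hB : E.minWeight ν < ν * B) (u : ℝ) :
    E.quotient ν (E.minWeight ν) (0, u) = (E.face ν).eval u := by
  rw [quotient, face, Polynomial.eval_finsetSum, Finset.sum_filter]
  simp only [zero_pow (Nat.sub_ne_zero_of_lt hB), zero_mul, add_zero]
  refine Finset.sum_congr rfl fun k hk => ?_
  split_ifs with h
  · simp [h, mul_comm]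
  · have hne : E.o k + ν * k - E.minWeight ν ≠ 0 :=
      Nat.sub_ne_zero_of_lt (lt_of_le_of_ne (E.minWeight_le ν hk) (Ne.symm h))
    simp [zero_pow hne]

lemma analyticAt_quotient {ν : ℕ} (hν : ν ≠ 0) (A : ℕ) (u : ℝ) :
    AnalyticAt ℝ (E.quotient ν A) (0, u) := by
  have hfst : AnalyticAt ℝ (fun z : ℝ × ℝ => z.1) (0, u) := analyticAt_fst
  have hsnd : AnalyticAt ℝ (fun z : ℝ × ℝ => z.2) (0, u) := analyticAt_snd
  have hU : AnalyticAt ℝ (fun z : ℝ × ℝ => E.U (z.1, z.1 ^ ν * z.2)) (0, u) :=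
    AnalyticAt.fun_comp (f := fun z : ℝ × ℝ => (z.1, z.1 ^ ν * z.2))
      (by simpa [zero_pow hν, ← Prod.zero_eq_mk] using E.analyticAt_U)
      (hfst.prod ((hfst.pow ν).mul hsnd))
  refine AnalyticAt.add (Finset.analyticAt_fun_sum _ fun k hk => ?_)
    (((hfst.pow _).mul (hsnd.pow _)).mul hU)
  exact ((hfst.pow _).mul (hsnd.pow _)).mul
    (AnalyticAt.fun_comp (f := fun z : ℝ × ℝ => z.1) (E.analyticAt_a k hk) hfst)

lemma tendsto_quotient {ν : ℕ} (hν : ν ≠ 0) (A : ℕ) (u : ℝ) :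
    Tendsto (fun t => E.quotient ν A (t, u)) (𝓝[>] 0) (𝓝 (E.quotient ν A (0, u))) := by
  have hline : Tendsto (fun t : ℝ => (t, u)) (𝓝[>] 0) (𝓝 (0, u)) :=
    ((continuous_id.prodMk continuous_const).tendsto 0).mono_left nhdsWithin_le_nhds
  exact (E.analyticAt_quotient hν A u).continuousAt.tendsto.comp hline

lemma eq_pow_mul_quotient {ν A : ℕ} (hA : ∀ k ∈ E.s, A ≤ E.o k + ν * k) (hB : A ≤ ν * B)
    {t u : ℝ} (h : (t, t ^ ν * u) ∈ E.domain) :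
    Q (t, t ^ ν * u) = t ^ A * E.quotient ν A (t, u) := by
  rw [show Q (t, t ^ ν * u) = _ from h, quotient, mul_add, Finset.mul_sum]
  congr 1
  · refine Finset.sum_congr rfl fun k hk => ?_
    have hpow : t ^ A * t ^ (E.o k + ν * k - A) = t ^ E.o k * (t ^ ν) ^ k := by
      rw [← pow_add, Nat.add_sub_cancel' (hA k hk), pow_add, pow_mul]
    linear_combination (-(u ^ k * E.a k t)) * hpow
  · have hpow : t ^ A * t ^ (ν * B - A) = (t ^ ν) ^ B := by
      rw [← pow_add, Nat.add_sub_cancel' hB, pow_mul]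
    linear_combination (-(u ^ B * E.U (t, t ^ ν * u))) * hpow

lemma eventually_curve_mem_domain {ν : ℕ} (hν : ν ≠ 0) (u : ℝ) :
    ∀ᶠ t in 𝓝[>] (0 : ℝ), (t, t ^ ν * u) ∈ E.domain := by
  have hcurve : Continuous fun t : ℝ => (t, t ^ ν * u) := by fun_prop
  exact ((hcurve.tendsto' 0 0 (by simp [zero_pow hν])).mono_left nhdsWithin_le_nhds).eventually E.eq

end NewtonExpansion

/-! ### Products comparable to a monomial along weighted curves -/

section Comparable

open Asymptotics

lemma tendsto_rpow_nhdsGT_zero {δ : ℝ} (hδ : 0 < δ) :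
    Tendsto (fun t : ℝ => t ^ δ) (𝓝[>] 0) (𝓝 0) := by
  have h := (Real.continuousAt_rpow_const 0 δ (Or.inr hδ.le)).tendsto
  rw [Real.zero_rpow hδ.ne'] at h
  exact h.mono_left nhdsWithin_le_nhds

lemma le_of_rpow_isBigO_rpow {a b : ℝ}
    (h : (fun t : ℝ => t ^ a) =O[𝓝[>] 0] fun t => t ^ b) : b ≤ a := by
  by_contra! hab
  have hlim : Tendsto (fun t : ℝ => t ^ b / t ^ a) (𝓝[>] 0) (𝓝 0) := by
    refine (tendsto_rpow_nhdsGT_zero (sub_pos.2 hab)).congr' ?_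
    filter_upwards [self_mem_nhdsWithin] with t ht
    exact Real.rpow_sub ht b a
  have hpos : ∀ᶠ t : ℝ in 𝓝[>] 0, t ^ a ≠ 0 := by
    filter_upwards [self_mem_nhdsWithin] with t ht
    exact (Real.rpow_pos_of_pos ht a).ne'
  exact isLittleO_irrefl hpos.frequently
    (h.trans_isLittleO ((isLittleO_iff_tendsto' (hpos.mono fun t ht h0 => absurd h0 ht)).2 hlim))

lemma eq_of_rpow_isTheta_rpow {a b : ℝ}
    (h : (fun t : ℝ => t ^ a) =Θ[𝓝[>] 0] fun t => t ^ b) : a = b :=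
  le_antisymm (le_of_rpow_isBigO_rpow h.2) (le_of_rpow_isBigO_rpow h.1)

lemma le_abs_of_abs_sub_le {x d η w : ℝ} (h : |x - d * w| ≤ η * |d| * w) (hw : 0 ≤ w) :
    (1 - η) * |d| * w ≤ |x| := by
  have hdw : |d * w| = |d| * w := by rw [abs_mul, abs_of_nonneg hw]
  have htri := abs_sub_abs_le_abs_sub (d * w) x
  rw [abs_sub_comm] at htri
  linarith

lemma abs_le_of_abs_sub_le {x d η w : ℝ} (h : |x - d * w| ≤ η * |d| * w) (hw : 0 ≤ w) :
    |x| ≤ (1 + η) * |d| * w := by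
  have hdw : |d * w| = |d| * w := by rw [abs_mul, abs_of_nonneg hw]
  have htri := abs_sub_abs_le_abs_sub x (d * w)
  linarith

lemma isTheta_of_abs_sub_le {X : Type*} {l : Filter X} {f w : X → ℝ} {d η : ℝ} (hd : d ≠ 0)
    (hη : η < 1) (hw : ∀ᶠ x in l, 0 ≤ w x)
    (h : ∀ᶠ x in l, |f x - d * w x| ≤ η * |d| * w x) : f =Θ[l] w := by
  have hpos : 0 < (1 - η) * |d| := mul_pos (sub_pos.2 hη) (abs_pos.2 hd)
  constructor
  · refine IsBigO.of_bound ((1 + η) * |d|) ?_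
    filter_upwards [hw, h] with x hx hfx
    rw [Real.norm_of_nonneg hx]
    exact abs_le_of_abs_sub_le hfx hx
  · refine IsBigO.of_bound ((1 - η) * |d|)⁻¹ ?_
    filter_upwards [hw, h] with x hx hfx
    rw [Real.norm_of_nonneg hx, inv_mul_eq_div, le_div_iff₀' hpos]
    exact le_abs_of_abs_sub_le hfx hx

lemma natTrailingDegree_prod_of_ne_zero {R ι : Type*} [CommRing R] [IsDomain R] (s : Finset ι)
    (f : ι → Polynomial R) (h : ∀ i ∈ s, f i ≠ 0) :
    (∏ i ∈ s, f i).natTrailingDegree = ∑ i ∈ s, (f i).natTrailingDegree := by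
  classical
  induction s using Finset.induction_on with
  | empty => simp
  | insert i s hi ih =>
    rw [Finset.forall_mem_insert] at h
    rw [Finset.prod_insert hi, Finset.sum_insert hi,
      Polynomial.natTrailingDegree_mul h.1 (Finset.prod_ne_zero_iff.2 h.2), ih h.2]

lemma isTheta_nhdsGT_zero_natTrailingDegree {p : Polynomial ℝ} (hp : p ≠ 0) :
    (fun u => p.eval u) =Θ[𝓝[>] 0] fun u => u ^ p.natTrailingDegree := by
  obtain ⟨q, hq, hq0⟩ := p.exists_eq_pow_rootMultiplicity_mul_and_not_dvd hp 0
  rw [Polynomial.rootMultiplicity_eq_natTrailingDegree'] at hq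
  have heval (u : ℝ) : p.eval u = u ^ p.natTrailingDegree * q.eval u := by
    conv_lhs => rw [hq]
    simp
  have hlim : Tendsto (fun u => q.eval u) (𝓝[>] 0) (𝓝 (q.eval 0)) :=
    (q.continuous.tendsto 0).mono_left nhdsWithin_le_nhds
  refine (isTheta_of_div_tendsto_nhds_ne_zero (hlim.congr' ?_) fun h0 =>
    hq0 (Polynomial.dvd_iff_isRoot.2 (by simpa using h0))).symm
  filter_upwards [self_mem_nhdsWithin] with u hu
  rw [heval, mul_div_cancel_left₀ _ (pow_ne_zero _ (mem_Ioi.1 hu).ne')]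

lemma natTrailingDegree_eq_of_isTheta {p : Polynomial ℝ} (hp : p ≠ 0) {β : ℕ}
    (h : (fun u => p.eval u) =Θ[𝓝[>] 0] fun u => u ^ β) : p.natTrailingDegree = β := by
  have hpow := (isTheta_nhdsGT_zero_natTrailingDegree hp).symm.trans h
  simp only [← Real.rpow_natCast] at hpow
  exact_mod_cast eq_of_rpow_isTheta_rpow hpow

lemma natDegree_eq_of_isTheta {p : Polynomial ℝ} (hp : p ≠ 0) {β : ℕ}
    (h : (fun u => p.eval u) =Θ[atTop] fun u => u ^ β) : p.natDegree = β := by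
  have hpow : (fun u : ℝ => u ^ p.natDegree) =Θ[atTop] fun u => u ^ β :=
    (p.isEquivalent_atTop_lead.isTheta.trans
      ((isTheta_const_mul_left (Polynomial.leadingCoeff_ne_zero.2 hp)).2
        (isTheta_refl _ _))).symm.trans h
  have hne (n : ℕ) : ∃ᶠ u : ℝ in atTop, u ^ n ≠ 0 :=
    ((eventually_ne_atTop 0).mono fun u hu => pow_ne_zero n hu).frequently
  rcases lt_trichotomy p.natDegree β with hlt | heq | hlt
  · exact absurd ((isLittleO_pow_pow_atTop_of_lt hlt).trans_isTheta hpow.symm)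
      (isLittleO_irrefl (hne _))
  · exact heq
  · exact absurd ((isLittleO_pow_pow_atTop_of_lt hlt).trans_isTheta hpow)
      (isLittleO_irrefl (hne _))

/-- Along the weighted curve `y = t^ν u` the function `P` is comparable to `d t^e u^β`. -/
def CurveComparable (P : ℝ × ℝ → ℝ) (d e η : ℝ) (β ν : ℕ) (u : ℝ) : Prop :=
  ∀ᶠ t in 𝓝[>] (0 : ℝ), |P (t, t ^ ν * u) - d * (t ^ e * u ^ β)| ≤ η * |d| * (t ^ e * u ^ β)

lemma CurveComparable.isTheta {P : ℝ × ℝ → ℝ} {d e η u : ℝ} {β ν : ℕ}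
    (hP : CurveComparable P d e η β ν u) (hd : d ≠ 0) (hη : η < 1) (hu : 0 < u) :
    (fun t => P (t, t ^ ν * u)) =Θ[𝓝[>] 0] fun t => t ^ e := by
  have huβ : u ^ β ≠ 0 := (pow_pos hu β).ne'
  refine (isTheta_of_abs_sub_le hd hη ?_ hP).trans ?_
  · filter_upwards [self_mem_nhdsWithin] with t ht
    exact mul_nonneg (Real.rpow_nonneg (mem_Ioi.1 ht).le e) (pow_nonneg hu.le β)
  · simp only [mul_comm _ (u ^ β)]
    exact (isTheta_const_mul_left huβ).2 (isTheta_refl _ _)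

namespace NewtonExpansion

lemma isBigO_curve {Q : ℝ × ℝ → ℝ} {B : ℕ} (E : NewtonExpansion Q B) {ν A : ℕ} (hν : ν ≠ 0)
    (hA : ∀ k ∈ E.s, A ≤ E.o k + ν * k) (hB : A ≤ ν * B) (u : ℝ) :
    (fun t => Q (t, t ^ ν * u)) =O[𝓝[>] 0] fun t => t ^ A := by
  have hquot := (isBigO_refl (fun t : ℝ => t ^ A) _).mul ((E.tendsto_quotient hν A u).isBigO_one ℝ)
  simp only [mul_one] at hquot
  refine hquot.congr' ?_ .rfl
  filter_upwards [E.eventually_curve_mem_domain hν u] with t ht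
  exact (E.eq_pow_mul_quotient hA hB ht).symm

variable {ι : Type*} [Fintype ι] {B : ℕ} {Q : ι → ℝ × ℝ → ℝ} (E : ∀ j, NewtonExpansion (Q j) B)

lemma exists_weight_lt {d e η u : ℝ} {β ν : ℕ} (hd : d ≠ 0) (hη : η < 1) (hν : ν ≠ 0)
    (hu : 0 < u) (hB : e < ν * B)
    (hT : CurveComparable (fun z => ∏ j, Q j z) d e η β ν u) (j : ι) :
    ∃ k ∈ (E j).s, (E j).o k + ν * k < ν * B := by
  classical
  by_contra! hcon
  have hprod : (fun t => ∏ i, Q i (t, t ^ ν * u)) =O[𝓝[>] 0] fun t => t ^ (ν * B) := by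
    have hothers : (fun t => ∏ i ∈ Finset.univ.erase j, Q i (t, t ^ ν * u)) =O[𝓝[>] 0]
        fun _ => (1 : ℝ) := by
      have := IsBigO.finsetProd (s := Finset.univ.erase j) fun i _ =>
        (E i).isBigO_curve hν (A := 0) (fun _ _ => Nat.zero_le _) (Nat.zero_le _) u
      simpa only [pow_zero, Finset.prod_const_one] using this
    simp only [← Finset.mul_prod_erase _ _ (Finset.mem_univ j)]
    simpa only [mul_one] using ((E j).isBigO_curve hν hcon le_rfl u).mul hothers
  have hpow := (hT.isTheta hd hη hu).2.trans hprod
  simp only [← Real.rpow_natCast] at hpow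
  have := le_of_rpow_isBigO_rpow hpow
  push_cast at this
  linarith

variable {ν : ℕ} {E}

lemma tendsto_prod_quotient (hν : ν ≠ 0) (hB : ∀ j, (E j).minWeight ν < ν * B) (u : ℝ) :
    Tendsto (fun t => ∏ j, (E j).quotient ν ((E j).minWeight ν) (t, u)) (𝓝[>] 0)
      (𝓝 ((∏ j, (E j).face ν).eval u)) := by
  rw [Polynomial.eval_prod]
  refine tendsto_finsetProd _ fun j _ => ?_
  rw [← (E j).quotient_minWeight_zero (hB j)]
  exact (E j).tendsto_quotient hν _ u

lemma eventually_prod_eq_pow_mul (hν : ν ≠ 0) (hB : ∀ j, (E j).minWeight ν < ν * B) (u : ℝ) :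
    ∀ᶠ t in 𝓝[>] (0 : ℝ), ∏ j, Q j (t, t ^ ν * u) =
      t ^ (∑ j, (E j).minWeight ν) * ∏ j, (E j).quotient ν ((E j).minWeight ν) (t, u) := by
  filter_upwards [eventually_all.2 fun j => (E j).eventually_curve_mem_domain hν u] with t ht
  rw [← Finset.prod_pow_eq_pow_sum, ← Finset.prod_mul_distrib]
  exact Finset.prod_congr rfl fun j _ =>
    (E j).eq_pow_mul_quotient (fun k => (E j).minWeight_le ν) (hB j).le (ht j)

variable {d e η : ℝ} {β : ℕ} {J : Set ℝ}

lemma sum_minWeight_eq (hd : d ≠ 0) (hη : η < 1) (hν : ν ≠ 0) (hJ : J.Infinite)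
    (hJ0 : ∀ u ∈ J, 0 < u) (hs : ∀ j, (E j).s.Nonempty) (hB : ∀ j, (E j).minWeight ν < ν * B)
    (hT : ∀ u ∈ J, CurveComparable (fun z => ∏ j, Q j z) d e η β ν u) :
    ((∑ j, (E j).minWeight ν : ℕ) : ℝ) = e := by
  have hface : ∏ j, (E j).face ν ≠ 0 :=
    Finset.prod_ne_zero_iff.2 fun j _ => (E j).face_ne_zero ν (hs j)
  obtain ⟨u, huJ, hu⟩ : ∃ u ∈ J, (∏ j, (E j).face ν).eval u ≠ 0 := by
    by_contra! hcon
    exact hface (Polynomial.eq_zero_of_infinite_isRoot _ (hJ.mono hcon))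
  have hprod : (fun t => ∏ j, Q j (t, t ^ ν * u)) =Θ[𝓝[>] 0]
      fun t => t ^ (∑ j, (E j).minWeight ν) := by
    refine (isTheta_of_div_tendsto_nhds_ne_zero
      ((tendsto_prod_quotient hν hB u).congr' ?_) hu).symm
    filter_upwards [eventually_prod_eq_pow_mul hν hB u, self_mem_nhdsWithin] with t ht ht0
    rw [ht, mul_div_cancel_left₀ _ (pow_ne_zero _ (mem_Ioi.1 ht0).ne')]
  have hpow := hprod.symm.trans ((hT u huJ).isTheta hd hη (hJ0 u huJ))
  simp only [← Real.rpow_natCast] at hpow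
  exact eq_of_rpow_isTheta_rpow hpow

lemma prod_face_comparable (hd : d ≠ 0) (hη : η < 1) (hν : ν ≠ 0) (hJ : J.Infinite)
    (hJ0 : ∀ u ∈ J, 0 < u) (hs : ∀ j, (E j).s.Nonempty) (hB : ∀ j, (E j).minWeight ν < ν * B)
    (hT : ∀ u ∈ J, CurveComparable (fun z => ∏ j, Q j z) d e η β ν u) :
    ∀ u ∈ J, |(∏ j, (E j).face ν).eval u - d * u ^ β| ≤ η * |d| * u ^ β := by
  intro u huJ
  refine le_of_tendsto ((tendsto_prod_quotient hν hB u).sub_const _).abs ?_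
  filter_upwards [hT u huJ, eventually_prod_eq_pow_mul hν hB u, self_mem_nhdsWithin]
    with t ht hprod ht0
  have hpos : 0 < t ^ e := Real.rpow_pos_of_pos ht0 e
  rw [hprod, ← Real.rpow_natCast, sum_minWeight_eq hd hη hν hJ hJ0 hs hB hT, mul_left_comm d,
    ← mul_sub, abs_mul, abs_of_pos hpos] at ht
  exact le_of_mul_le_mul_left (ht.trans_eq (by ring)) hpos

end NewtonExpansion

lemma eval_ne_zero_of_comparable_on_closure {p : Polynomial ℝ} {d η : ℝ} (hd : d ≠ 0)
    (hη : η < 1) {β : ℕ} {J : Set ℝ} (h : ∀ u ∈ J, |p.eval u - d * u ^ β| ≤ η * |d| * u ^ β)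
    {u : ℝ} (hu : u ∈ closure J) (hu0 : 0 < u) : p.eval u ≠ 0 := by
  have hcl : closure J ⊆ {u | |p.eval u - d * u ^ β| ≤ η * |d| * u ^ β} :=
    closure_minimal h (isClosed_le (by fun_prop) (by fun_prop))
  have hlow := le_abs_of_abs_sub_le (hcl hu) (pow_nonneg hu0.le β)
  have hpos : 0 < (1 - η) * |d| * u ^ β :=
    mul_pos (mul_pos (sub_pos.2 hη) (abs_pos.2 hd)) (pow_pos hu0 β)
  exact abs_pos.1 (hpos.trans_le hlow)

namespace NewtonExpansion

variable {ι : Type*} [Fintype ι] {B : ℕ} {Q : ι → ℝ × ℝ → ℝ} {E : ∀ j, NewtonExpansion (Q j) B}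
  {d e η H : ℝ} {β n : ℕ} {b : ι → ℕ}

variable (E) in
/-- The index `b j` is the lower end of the face of weight `n` of the Newton polygon of `Q j`, the
face polynomials have no zeros in `(0, H]`, and the `b j` add up to `β`. -/
structure LowerVertex (n : ℕ) (H : ℝ) (β : ℕ) (b : ι → ℕ) : Prop where
  mem : ∀ j, b j ∈ (E j).s
  weight_eq : ∀ j, (E j).o (b j) + n * b j = (E j).minWeight n
  minWeight_lt : ∀ j, (E j).minWeight n < n * B
  face_ne : ∀ j, ∀ u ∈ Ioc 0 H, ((E j).face n).eval u ≠ 0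
  sum_eq : ∑ j, b j = β

lemma exists_lowerVertex (hd : d ≠ 0) (hη : η < 1) (hn : n ≠ 0) (hH : 0 < H) (hB : e < n * B)
    (hT : ∀ u ∈ Ioo 0 H, CurveComparable (fun z => ∏ j, Q j z) d e η β n u) :
    ∃ b, LowerVertex E n H β b := by
  have hlt := exists_weight_lt E hd hη hn (half_pos hH) hB
    (hT (H / 2) ⟨half_pos hH, half_lt_self hH⟩)
  have hs : ∀ j, (E j).s.Nonempty := fun j => (hlt j).imp fun _ h => h.1
  have hnB : ∀ j, (E j).minWeight n < n * B := fun j => by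
    obtain ⟨k, hk, hkn⟩ := hlt j
    exact ((E j).minWeight_le n hk).trans_lt hkn
  have hcomp := prod_face_comparable hd hη hn (Ioo_infinite hH) (fun u hu => hu.1) hs hnB hT
  have hface : ∀ j ∈ Finset.univ, (E j).face n ≠ 0 := fun j _ => (E j).face_ne_zero n (hs j)
  have hb (j : ι) := (E j).mem_of_coeff_face_ne_zero (k := ((E j).face n).natTrailingDegree)
    fun h0 => hface j (Finset.mem_univ j) (Polynomial.trailingCoeff_eq_zero.1 h0)
  refine ⟨fun j => ((E j).face n).natTrailingDegree, fun j => (hb j).1, fun j => (hb j).2, hnB,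
    fun j u hu => ?_, ?_⟩
  · have hprod := eval_ne_zero_of_comparable_on_closure hd hη hcomp
      (by rw [closure_Ioo hH.ne]; exact ⟨hu.1.le, hu.2⟩) hu.1
    rw [Polynomial.eval_prod] at hprod
    exact Finset.prod_ne_zero_iff.1 hprod j (Finset.mem_univ j)
  · rw [← natTrailingDegree_prod_of_ne_zero _ _ hface]
    refine natTrailingDegree_eq_of_isTheta (Finset.prod_ne_zero_iff.2 hface)
      (isTheta_of_abs_sub_le hd hη ?_ ?_) <;>
    filter_upwards [Ioo_mem_nhdsGT hH] with u hu
    · exact pow_nonneg hu.1.le β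
    · exact hcomp u hu

namespace LowerVertex

lemma le (hb : LowerVertex E n H β b) (j : ι) {k : ℕ} (hk : k ∈ (E j).s) :
    (E j).o (b j) + n * b j ≤ (E j).o k + n * k :=
  (hb.weight_eq j).trans_le ((E j).minWeight_le n hk)

lemma le_of_weight_eq_minWeight (hb : LowerVertex E n H β b) {ν : ℕ} (hν : n < ν) {j : ι} {k : ℕ}
    (hk : k ∈ (E j).s) (hkν : (E j).o k + ν * k = (E j).minWeight ν) : k ≤ b j := by
  have hle_n := hb.le j hk
  have hle_ν := (E j).minWeight_le ν (hb.mem j)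
  rw [← hkν] at hle_ν
  obtain ⟨c, rfl⟩ := Nat.exists_eq_add_of_lt hν
  by_contra! hlt
  nlinarith

lemma minWeight_lt_of_lt (hb : LowerVertex E n H β b) {ν : ℕ} (hν : n < ν) (j : ι) :
    (E j).minWeight ν < ν * B := by
  have hle_ν := (E j).minWeight_le ν (hb.mem j)
  have hlt_n := (hb.weight_eq j).trans_lt (hb.minWeight_lt j)
  obtain ⟨c, rfl⟩ := Nat.exists_eq_add_of_lt hν
  nlinarith

/- The degrees of the face polynomials of weight `ν` are at most `b j`, and both have sum `β`. -/
lemma isUpperVertex_of_larger_weight (hb : LowerVertex E n H β b) {ν : ℕ} (hν : n < ν) {h : ℝ}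
    (hh : 0 ≤ h) (hd : d ≠ 0) (hη : η < 1)
    (hT : ∀ u ∈ Ioi h, CurveComparable (fun z => ∏ j, Q j z) d e η β ν u) (j : ι) :
    (E j).o (b j) + ν * b j = (E j).minWeight ν ∧
      ∀ u ∈ Ici h, 0 < u → ((E j).face ν).eval u ≠ 0 := by
  have hs : ∀ j, (E j).s.Nonempty := fun j => ⟨b j, hb.mem j⟩
  have hcomp := prod_face_comparable hd hη (Nat.ne_zero_of_lt hν) (Ioi_infinite h)
    (fun u hu => hh.trans_lt hu) hs (hb.minWeight_lt_of_lt hν) hT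
  have hface : ∀ j ∈ Finset.univ, (E j).face ν ≠ 0 := fun j _ => (E j).face_ne_zero ν (hs j)
  have hdeg (j : ι) := (E j).mem_of_coeff_face_ne_zero (k := ((E j).face ν).natDegree)
    fun h0 => hface j (Finset.mem_univ j) (Polynomial.leadingCoeff_eq_zero.1 h0)
  have hsum : ∑ j, ((E j).face ν).natDegree = ∑ j, b j := by
    rw [hb.sum_eq, ← Polynomial.natDegree_prod _ _ hface]
    refine natDegree_eq_of_isTheta (Finset.prod_ne_zero_iff.2 hface)
      (isTheta_of_abs_sub_le hd hη ?_ ?_)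
    · filter_upwards [eventually_ge_atTop 0] with u hu
      exact pow_nonneg hu β
    · filter_upwards [eventually_gt_atTop h] with u hu
      exact hcomp u hu
  have heq := (Finset.sum_eq_sum_iff_of_le fun j _ =>
    hb.le_of_weight_eq_minWeight hν (hdeg j).1 (hdeg j).2).1 hsum j (Finset.mem_univ j)
  refine ⟨heq ▸ (hdeg j).2, fun u hu hu0 => ?_⟩
  have hprod := eval_ne_zero_of_comparable_on_closure hd hη hcomp (by rwa [closure_Ioi]) hu0
  rw [Polynomial.eval_prod] at hprod
  exact Finset.prod_ne_zero_iff.1 hprod j (Finset.mem_univ j)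

end LowerVertex

end NewtonExpansion

end Comparable

/-! ### Euler operators -/

lemma analyticAt_rpow_const {x : ℝ} (hx : x ≠ 0) (a : ℝ) : AnalyticAt ℝ (fun x : ℝ => x ^ a) x :=
  (Real.contDiffAt_rpow_const_of_ne (n := ⊤) hx).analyticAt

lemma descProd_succ (a : ℝ) (l : ℕ) : descProd a (l + 1) = a * descProd (a - 1) l := by
  rw [descProd, descProd, Finset.prod_range_succ', mul_comm]
  congr 1
  · simp
  · refine Finset.prod_congr rfl fun j _ => ?_
    push_cast
    ring

section Euler

variable {E : Type*} [NormedAddCommGroup E] [NormedSpace ℝ E]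

/-- The operator `Φ ↦ a Φ + dΦ(Λ z)`, which describes the derivative of `x^a Φ(γ(x))` along a curve
with `x γ'(x) = Λ γ(x)`. -/
noncomputable def eulerOp (Λ : E →L[ℝ] E) (a : ℝ) (Φ : E → ℝ) (z : E) : ℝ :=
  a * Φ z + fderiv ℝ Φ z (Λ z)

/-- The composition of the operators `eulerOp Λ a`, `eulerOp Λ (a - 1)`, …, `l` of them. -/
noncomputable def eulerIter (Λ : E →L[ℝ] E) : ℝ → ℕ → (E → ℝ) → E → ℝ
  | _, 0, Φ => Φ
  | a, l + 1, Φ => eulerIter Λ (a - 1) l (eulerOp Λ a Φ)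

lemma analyticAt_eulerOp {Φ : E → ℝ} {z : E} (h : AnalyticAt ℝ Φ z) (Λ : E →L[ℝ] E) (a : ℝ) :
    AnalyticAt ℝ (eulerOp Λ a Φ) z :=
  (analyticAt_const.mul h).add <| AnalyticAt.fun_comp (f := fun z => (fderiv ℝ Φ z, Λ z))
    ((ContinuousLinearMap.id ℝ (E →L[ℝ] ℝ)).analyticAt_bilinear _)
    (h.fderiv.prod (Λ.analyticAt z))

lemma analyticAt_eulerIter {Φ : E → ℝ} {z : E} (h : AnalyticAt ℝ Φ z) (Λ : E →L[ℝ] E) (a : ℝ)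
    (l : ℕ) : AnalyticAt ℝ (eulerIter Λ a l Φ) z := by
  induction l generalizing a Φ with
  | zero => exact h
  | succ _ ih => exact ih (analyticAt_eulerOp h Λ a) (a - 1)

lemma eulerIter_of_map_eq_zero {Λ : E →L[ℝ] E} {z : E} (hz : Λ z = 0) (a : ℝ) (l : ℕ)
    (Φ : E → ℝ) : eulerIter Λ a l Φ z = descProd a l * Φ z := by
  induction l generalizing a Φ with
  | zero => simp [eulerIter, descProd]
  | succ _ ih =>
    rw [eulerIter, ih, descProd_succ, eulerOp, hz, map_zero]
    ring

lemma hasDerivAt_rpow_mul_comp {Λ : E →L[ℝ] E} {γ : ℝ → E} {a x : ℝ} {Φ : E → ℝ} (hx : 0 < x)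
    (hΦ : AnalyticAt ℝ Φ (γ x)) (hγ : HasDerivAt γ (x⁻¹ • Λ (γ x)) x) :
    HasDerivAt (fun x => x ^ a * Φ (γ x)) (x ^ (a - 1) * eulerOp Λ a Φ (γ x)) x := by
  refine ((Real.hasDerivAt_rpow_const (p := a) (Or.inl hx.ne')).mul
    (hΦ.differentiableAt.hasFDerivAt.comp_hasDerivAt x hγ)).congr_deriv ?_
  rw [eulerOp, map_smul, smul_eq_mul, Real.rpow_sub_one hx.ne', Function.comp_apply]
  ring

lemma iteratedDeriv_rpow_mul_comp {Λ : E →L[ℝ] E} {f : ℝ → ℝ} {γ : ℝ → E} {C a x : ℝ}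
    {Φ : E → ℝ} (hx : 0 < x)
    (h : ∀ᶠ x' in 𝓝 x, f x' = C * (x' ^ a * Φ (γ x')) ∧ AnalyticAt ℝ Φ (γ x') ∧
      HasDerivAt γ (x'⁻¹ • Λ (γ x')) x') (l : ℕ) :
    iteratedDeriv l f x = C * (x ^ (a - l) * eulerIter Λ a l Φ (γ x)) := by
  induction l generalizing f a Φ with
  | zero => simpa [eulerIter] using h.self_of_nhds.1
  | succ l ih =>
    rw [iteratedDeriv_succ', ih (a := a - 1) (Φ := eulerOp Λ a Φ)]
    · push_cast
      rw [eulerIter, sub_sub, add_comm (1 : ℝ)]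
    · filter_upwards [h.eventually_nhds, lt_mem_nhds hx] with y hy hy0
      obtain ⟨-, han, hγ⟩ := hy.self_of_nhds
      have hf : f =ᶠ[𝓝 y] fun x' => C * (x' ^ a * Φ (γ x')) := hy.mono fun _ h => h.1
      refine ⟨?_, analyticAt_eulerOp han Λ a, hγ⟩
      rw [hf.deriv_eq, ((hasDerivAt_rpow_mul_comp hy0 han hγ).const_mul C).deriv]

/-- On `D` the chart `ζ` turns the vector fields `x ∂_x` and, where `y`-derivatives matter,
`y ∂_y` into the linear vector fields `Λ₁` and `Λ₂`, and `F` is `x^α y^β Φ(ζ)`. -/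
structure EulerForm (Λ₁ Λ₂ : E →L[ℝ] E) (F : ℝ × ℝ → ℝ) (ζ : ℝ × ℝ → E) (Φ : E → ℝ)
    (D : Set (ℝ × ℝ)) (α : ℝ) (β : ℕ) : Prop where
  isOpen : IsOpen D
  fst_pos : ∀ p ∈ D, 0 < p.1
  snd_pos : β ≠ 0 → ∀ p ∈ D, 0 < p.2
  analyticAt_chart : ∀ p ∈ D, AnalyticAt ℝ ζ p
  analyticAt : ∀ p ∈ D, AnalyticAt ℝ Φ (ζ p)
  eq : ∀ p ∈ D, F p = p.1 ^ α * p.2 ^ β * Φ (ζ p)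
  hasDerivAt_fst : ∀ p ∈ D, HasDerivAt (fun x => ζ (x, p.2)) (p.1⁻¹ • Λ₁ (ζ p)) p.1
  hasDerivAt_snd : β ≠ 0 → ∀ p ∈ D, HasDerivAt (fun y => ζ (p.1, y)) (p.2⁻¹ • Λ₂ (ζ p)) p.2

namespace EulerForm

variable {Λ₁ Λ₂ : E →L[ℝ] E} {F : ℝ × ℝ → ℝ} {ζ : ℝ × ℝ → E} {Φ : E → ℝ} {D : Set (ℝ × ℝ)}
  {α : ℝ} {β : ℕ} {p : ℝ × ℝ}

lemma iteratedDeriv_snd (h : EulerForm Λ₁ Λ₂ F ζ Φ D α β) (hp : p ∈ D) {m : ℕ} (hm : m ≤ β) :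
    iteratedDeriv m (fun y => F (p.1, y)) p.2 =
      p.1 ^ α * p.2 ^ (β - m) * eulerIter Λ₂ β m Φ (ζ p) := by
  rcases eq_or_ne m 0 with rfl | hm0
  · simpa [eulerIter] using h.eq p hp
  have hβ : β ≠ 0 := fun h0 => hm0 (Nat.le_zero.1 (h0 ▸ hm))
  have hslice : ∀ᶠ y in 𝓝 p.2, (p.1, y) ∈ D :=
    ((Continuous.prodMk_right p.1).tendsto p.2).eventually (h.isOpen.mem_nhds hp)
  rw [iteratedDeriv_rpow_mul_comp (Λ := Λ₂) (γ := fun y => ζ (p.1, y)) (C := p.1 ^ α) (a := β)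
    (Φ := Φ) (h.snd_pos hβ p hp), ← Nat.cast_sub hm, Real.rpow_natCast, mul_assoc]
  filter_upwards [hslice] with y hy
  refine ⟨?_, h.analyticAt _ hy, h.hasDerivAt_snd hβ _ hy⟩
  rw [h.eq _ hy, Real.rpow_natCast, mul_assoc]

lemma pderiv2_eq (h : EulerForm Λ₁ Λ₂ F ζ Φ D α β) (hp : p ∈ D) (l : ℕ) {m : ℕ} (hm : m ≤ β) :
    pderiv2 l m F p = p.1 ^ (α - l) * p.2 ^ (β - m) *
      eulerIter Λ₁ α l (eulerIter Λ₂ β m Φ) (ζ p) := by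
  have hslice : ∀ᶠ x in 𝓝 p.1, (x, p.2) ∈ D :=
    ((Continuous.prodMk_left p.2).tendsto p.1).eventually (h.isOpen.mem_nhds hp)
  rw [pderiv2, iteratedDeriv_rpow_mul_comp (Λ := Λ₁) (γ := fun x => ζ (x, p.2))
    (C := p.2 ^ (β - m)) (a := α) (Φ := eulerIter Λ₂ β m Φ) (h.fst_pos p hp)]
  · ring
  · filter_upwards [hslice] with x hx
    refine ⟨?_, analyticAt_eulerIter (h.analyticAt _ hx) _ _ m, h.hasDerivAt_fst _ hx⟩
    rw [h.iteratedDeriv_snd hx hm]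
    ring

end EulerForm

/-- At points with chart value `z` the derivatives of `x^α y^β Φ` up to order `(α, β)` agree with
those of the monomial `d x^α y^β` up to the relative error `η`. -/
def EulerClose (Λ₁ Λ₂ : E →L[ℝ] E) (Φ : E → ℝ) (α : ℚ) (β : ℕ) (d η : ℝ) (z : E) : Prop :=
  ∀ l : ℕ, (l : ℚ) ≤ α → ∀ m ≤ β,
    |eulerIter Λ₁ α l (eulerIter Λ₂ β m Φ) z - descProd α l * descProd β m * d| ≤ η * |d|

/- At a common zero of `Λ₁` and `Λ₂` the Euler operators act as on a monomial. -/
lemma eventually_eulerClose {Λ₁ Λ₂ : E →L[ℝ] E} {Φ : E → ℝ} {z₀ : E} (hΦ : AnalyticAt ℝ Φ z₀)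
    (h₁ : Λ₁ z₀ = 0) (h₂ : Λ₂ z₀ = 0) {d : E → ℝ} (hd : ContinuousAt d z₀) (hdΦ : d z₀ = Φ z₀)
    (hne : Φ z₀ ≠ 0) (α : ℚ) (β : ℕ) {η : ℝ} (hη : 0 < η) :
    ∀ᶠ z in 𝓝 z₀, EulerClose Λ₁ Λ₂ Φ α β (d z) η z := by
  have h : ∀ l ∈ Finset.range (⌊α⌋₊ + 1), ∀ m ∈ Finset.range (β + 1), ∀ᶠ z in 𝓝 z₀,
      |eulerIter Λ₁ α l (eulerIter Λ₂ β m Φ) z - descProd α l * descProd β m * d z| <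
        η * |d z| := by
    intro l _ m _
    have hiter := (analyticAt_eulerIter (analyticAt_eulerIter hΦ Λ₂ β m) Λ₁ α l).continuousAt
    refine (hiter.sub (continuousAt_const.mul hd)).abs.eventually_lt
      (continuousAt_const.mul hd.abs) ?_
    rw [Pi.sub_apply, Pi.mul_apply, eulerIter_of_map_eq_zero h₁, eulerIter_of_map_eq_zero h₂, hdΦ,
      mul_assoc, sub_self, abs_zero]
    exact mul_pos hη (abs_pos.2 hne)
  filter_upwards [(Finset.eventually_all _).2 fun l hl => (Finset.eventually_all _).2 (h l hl)]
    with z hz l hl m hm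
  exact (hz l (Finset.mem_range.2 (Nat.lt_succ_of_le (Nat.le_floor (by exact_mod_cast hl)))) m
    (Finset.mem_range.2 (Nat.lt_succ_of_le hm))).le

lemma EulerForm.monomialOn {Λ₁ Λ₂ : E →L[ℝ] E} {F : ℝ × ℝ → ℝ} {ζ : ℝ × ℝ → E} {Φ : E → ℝ}
    {D : Set (ℝ × ℝ)} {α : ℚ} {β : ℕ} {d η : ℝ} (h : EulerForm Λ₁ Λ₂ F ζ Φ D α β)
    (hclose : ∀ p ∈ D, EulerClose Λ₁ Λ₂ Φ α β d η (ζ p)) : MonomialOn F D α β d η := by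
  intro p hp
  have hp1 := h.fst_pos p hp
  constructor
  · have hfst : AnalyticAt ℝ (fun q : ℝ × ℝ => q.1 ^ (α : ℝ)) p :=
      AnalyticAt.fun_comp (f := fun q : ℝ × ℝ => q.1) (g := fun x : ℝ => x ^ (α : ℝ))
        (analyticAt_rpow_const hp1.ne' _) analyticAt_fst
    refine ((hfst.mul (analyticAt_snd.pow β)).mul
      ((h.analyticAt p hp).fun_comp (h.analyticAt_chart p hp))).congr ?_
    filter_upwards [h.isOpen.mem_nhds hp] with q hq
    exact (h.eq q hq).symm
  · intro l hl m hm
    have hw : 0 ≤ p.1 ^ ((α : ℝ) - l) * p.2 ^ (β - m) := by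
      refine mul_nonneg (Real.rpow_nonneg hp1.le _) ?_
      rcases eq_or_ne β 0 with rfl | hβ
      · simp
      · exact pow_nonneg (h.snd_pos hβ p hp).le _
    calc
      _ = p.1 ^ ((α : ℝ) - l) * p.2 ^ (β - m) * |eulerIter Λ₁ α l (eulerIter Λ₂ β m Φ) (ζ p) -
            descProd α l * descProd β m * d| := by
        rw [h.pderiv2_eq hp l hm, ← abs_of_nonneg hw, ← abs_mul, abs_of_nonneg hw]
        congr 1
        ring
      _ ≤ p.1 ^ ((α : ℝ) - l) * p.2 ^ (β - m) * (η * |d|) :=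
        mul_le_mul_of_nonneg_left (hclose p hp l hl m hm) hw
      _ = _ := by ring

end Euler

/-! ### Charts near curves and vertices -/

/-- The diagonal linear map with entries `κ`, `μ`, `ν`. -/
noncomputable def diagMap (κ μ ν : ℝ) : (ℝ × ℝ) × ℝ →L[ℝ] (ℝ × ℝ) × ℝ :=
  ((κ • ContinuousLinearMap.id ℝ ℝ).prodMap (μ • ContinuousLinearMap.id ℝ ℝ)).prodMap
    (ν • ContinuousLinearMap.id ℝ ℝ)

@[simp] lemma diagMap_apply (κ μ ν : ℝ) (z : (ℝ × ℝ) × ℝ) :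
    diagMap κ μ ν z = ((κ * z.1.1, μ * z.1.2), ν * z.2) := rfl

lemma root_pow_eq_rpow {N ν : ℕ} (hN : N ≠ 0) {e x : ℝ} (he : (N : ℝ) * e = ν) (hx : 0 ≤ x) :
    (x ^ (N : ℝ)⁻¹) ^ ν = x ^ e := by
  rw [← Real.rpow_natCast, ← Real.rpow_mul hx, ← he, inv_mul_cancel_left₀ (Nat.cast_ne_zero.2 hN)]

lemma pow_rpow_eq_pow {N ν : ℕ} {e t : ℝ} (he : (N : ℝ) * e = ν) (ht : 0 ≤ t) :
    (t ^ N) ^ e = t ^ ν := by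
  rw [← Real.rpow_natCast, ← Real.rpow_mul ht, he, Real.rpow_natCast]

lemma rpow_ratCast_div {N : ℕ} {x : ℝ} (hx : 0 ≤ x) (A : ℕ) :
    x ^ (((A : ℚ) / N : ℚ) : ℝ) = (x ^ (N : ℝ)⁻¹) ^ A := by
  rw [← Real.rpow_natCast, ← Real.rpow_mul hx]
  congr 1
  push_cast
  ring

lemma root_lt_of_lt_pow {N : ℕ} (hN : N ≠ 0) {x ρ : ℝ} (hx : 0 ≤ x) (hρ : 0 ≤ ρ) (h : x < ρ ^ N) :
    x ^ (N : ℝ)⁻¹ < ρ := by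
  have := Real.rpow_lt_rpow hx h (inv_pos.2 (Nat.cast_pos.2 (Nat.pos_of_ne_zero hN)))
  rwa [Real.pow_rpow_inv_natCast hρ hN] at this

lemma nonneg_of_natCast_mul_eq_natCast {N ν : ℕ} (hN : N ≠ 0) {e : ℝ} (he : (N : ℝ) * e = ν) :
    0 ≤ e :=
  nonneg_of_mul_nonneg_right (he ▸ Nat.cast_nonneg ν) (Nat.cast_pos.2 (Nat.pos_of_ne_zero hN))

/-- The region `{0 < x < ρ, |y| < ρ x^e}`, a neighborhood of the first axis of order `e`. -/
def axisRegion (e ρ : ℝ) : Set (ℝ × ℝ) :=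
  {q | 0 < q.1 ∧ q.1 < ρ ∧ |q.2| < ρ * q.1 ^ e}

/-- The region `{0 < x < ρ, y > 0, ε x^m < ρ y, y < ρ x^e}` between two curves of orders `m`
and `e`; the value `ε = 0` removes the lower curve. -/
def vertexRegion (e m ε ρ : ℝ) : Set (ℝ × ℝ) :=
  {q | 0 < q.1 ∧ q.1 < ρ ∧ 0 < q.2 ∧ q.2 < ρ * q.1 ^ e ∧ ε * q.1 ^ m < ρ * q.2}

lemma continuous_rpow_fst {e : ℝ} (he : 0 ≤ e) : Continuous fun q : ℝ × ℝ => q.1 ^ e :=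
  (Real.continuous_rpow_const he).comp continuous_fst

lemma isOpen_axisRegion {e : ℝ} (he : 0 ≤ e) (ρ : ℝ) : IsOpen (axisRegion e ρ) :=
  (isOpen_lt continuous_const continuous_fst).inter <|
    (isOpen_lt continuous_fst continuous_const).inter <|
      isOpen_lt continuous_snd.abs (continuous_const.mul (continuous_rpow_fst he))

lemma isOpen_vertexRegion {e m : ℝ} (he : 0 ≤ e) (hm : 0 ≤ m) (ε ρ : ℝ) :
    IsOpen (vertexRegion e m ε ρ) :=
  (isOpen_lt continuous_const continuous_fst).inter <|
    (isOpen_lt continuous_fst continuous_const).inter <|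
      (isOpen_lt continuous_const continuous_snd).inter <|
        (isOpen_lt continuous_snd (continuous_const.mul (continuous_rpow_fst he))).inter <|
          isOpen_lt (continuous_const.mul (continuous_rpow_fst hm))
            (continuous_const.mul continuous_snd)

/-- The chart `(x, y) ↦ ((x^κ, y x^{-e}), c)`; the constant coordinate makes estimates uniform in
the parameter `c`. -/
noncomputable def faceChart (κ e c : ℝ) (q : ℝ × ℝ) : (ℝ × ℝ) × ℝ :=
  ((q.1 ^ κ, q.2 * q.1 ^ (-e)), c)

/-- The chart `(x, y) ↦ ((x^κ, y x^{-e}), ε x^m y⁻¹)`. -/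
noncomputable def vertexChart (κ e m ε : ℝ) (q : ℝ × ℝ) : (ℝ × ℝ) × ℝ :=
  ((q.1 ^ κ, q.2 * q.1 ^ (-e)), ε * q.2⁻¹ * q.1 ^ m)

section Charts

variable {κ e c m ε : ℝ} {q : ℝ × ℝ}

lemma analyticAt_rpow_fst (hq : 0 < q.1) (κ : ℝ) : AnalyticAt ℝ (fun q : ℝ × ℝ => q.1 ^ κ) q :=
  AnalyticAt.fun_comp (f := fun q : ℝ × ℝ => q.1) (g := fun x : ℝ => x ^ κ)
    (analyticAt_rpow_const hq.ne' κ) analyticAt_fst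

lemma analyticAt_faceChart (hq : 0 < q.1) : AnalyticAt ℝ (faceChart κ e c) q :=
  ((analyticAt_rpow_fst hq κ).prod (analyticAt_snd.mul (analyticAt_rpow_fst hq (-e)))).prod
    analyticAt_const

lemma analyticAt_vertexChart (hq : 0 < q.1) (hq' : 0 < q.2) :
    AnalyticAt ℝ (vertexChart κ e m ε) q :=
  ((analyticAt_rpow_fst hq κ).prod (analyticAt_snd.mul (analyticAt_rpow_fst hq (-e)))).prod
    ((analyticAt_const.mul (analyticAt_snd.inv hq'.ne')).mul (analyticAt_rpow_fst hq m))

lemma hasDerivAt_mul_rpow {x : ℝ} (hx : 0 < x) (κ C : ℝ) :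
    HasDerivAt (fun x : ℝ => C * x ^ κ) (x⁻¹ * (κ * (C * x ^ κ))) x := by
  refine ((Real.hasDerivAt_rpow_const (p := κ) (Or.inl hx.ne')).const_mul C).congr_deriv ?_
  rw [Real.rpow_sub_one hx.ne']
  ring

lemma hasDerivAt_faceChart (hq : 0 < q.1) :
    HasDerivAt (fun x => faceChart κ e c (x, q.2))
      (q.1⁻¹ • diagMap κ (-e) 0 (faceChart κ e c q)) q.1 := by
  have := ((hasDerivAt_mul_rpow hq κ 1).prodMk (hasDerivAt_mul_rpow hq (-e) q.2)).prodMk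
    (hasDerivAt_const q.1 c)
  simpa [faceChart] using this

lemma hasDerivAt_vertexChart_fst (hq : 0 < q.1) :
    HasDerivAt (fun x => vertexChart κ e m ε (x, q.2))
      (q.1⁻¹ • diagMap κ (-e) m (vertexChart κ e m ε q)) q.1 := by
  have := ((hasDerivAt_mul_rpow hq κ 1).prodMk (hasDerivAt_mul_rpow hq (-e) q.2)).prodMk
    (hasDerivAt_mul_rpow hq m (ε * q.2⁻¹))
  simpa [vertexChart] using this

lemma hasDerivAt_vertexChart_snd (hq : 0 < q.2) :
    HasDerivAt (fun y => vertexChart κ e m ε (q.1, y))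
      (q.2⁻¹ • diagMap 0 1 (-1) (vertexChart κ e m ε q)) q.2 := by
  have hmul : HasDerivAt (fun y : ℝ => y * q.1 ^ (-e)) (q.2⁻¹ * (1 * (q.2 * q.1 ^ (-e)))) q.2 := by
    refine ((hasDerivAt_id q.2).mul_const (q.1 ^ (-e))).congr_deriv ?_
    field_simp
  have hinv : HasDerivAt (fun y : ℝ => ε * y⁻¹ * q.1 ^ m)
      (q.2⁻¹ * (-1 * (ε * q.2⁻¹ * q.1 ^ m))) q.2 := by
    refine (((hasDerivAt_inv hq.ne').const_mul ε).mul_const (q.1 ^ m)).congr_deriv ?_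
    field_simp
  have := ((hasDerivAt_const q.2 (q.1 ^ κ)).prodMk hmul).prodMk hinv
  simpa [vertexChart] using this

lemma rpow_mul_mul_rpow_neg {x : ℝ} (hx : 0 < x) (e y : ℝ) : x ^ e * (y * x ^ (-e)) = y := by
  rw [mul_left_comm, ← Real.rpow_add hx, add_neg_cancel, Real.rpow_zero, mul_one]

variable {N : ℕ} {ρ r : ℝ}

lemma dist_root_mul_rpow_neg_lt (hN : N ≠ 0) (hr : 0 < r) (hρr : ρ ≤ r) (hρN : ρ ≤ r ^ N)
    (hq : q ∈ axisRegion e ρ) : dist (q.1 ^ (N : ℝ)⁻¹, q.2 * q.1 ^ (-e)) 0 < r := by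
  obtain ⟨hq0, hqρ, hqe⟩ := hq
  have hpos : 0 < q.1 ^ e := Real.rpow_pos_of_pos hq0 e
  rw [dist_zero_right, Prod.norm_def, max_lt_iff]
  constructor
  · rw [Real.norm_eq_abs, abs_of_pos (Real.rpow_pos_of_pos hq0 _)]
    exact root_lt_of_lt_pow hN hq0.le hr.le (hqρ.trans_le hρN)
  · rw [Real.norm_eq_abs, abs_mul, Real.rpow_neg hq0.le, abs_inv, abs_of_pos hpos,
      ← div_eq_mul_inv, div_lt_iff₀ hpos]
    exact hqe.trans_le (mul_le_mul_of_nonneg_right hρr hpos.le)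

lemma dist_vertexChart_lt (hN : N ≠ 0) (hr : 0 < r) (hρr : ρ ≤ r) (hρN : ρ ≤ r ^ N) (hε : 0 ≤ ε)
    (hq : q ∈ vertexRegion e m ε ρ) : dist (vertexChart (N : ℝ)⁻¹ e m ε q) 0 < r := by
  obtain ⟨hq0, hqρ, hq2, hqe, hqm⟩ := hq
  have haxis : q ∈ axisRegion e ρ := ⟨hq0, hqρ, by rwa [abs_of_pos hq2]⟩
  rw [Prod.dist_eq, max_lt_iff]
  refine ⟨dist_root_mul_rpow_neg_lt hN hr hρr hρN haxis, ?_⟩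
  simp only [vertexChart, Prod.snd_zero]
  rw [dist_zero_right, Real.norm_eq_abs, abs_of_nonneg (by positivity), mul_right_comm,
    ← div_eq_mul_inv, div_lt_iff₀ hq2]
  exact hqm.trans_le (mul_le_mul_of_nonneg_right hρr hq2.le)

end Charts

namespace NewtonExpansion

variable {Q : ℝ × ℝ → ℝ} {B : ℕ} (E : NewtonExpansion Q B)

/-- The quotient of `Q(t, t^ν (c + u))` by `t` to the minimal weight, as a function of
`((t, u), c)`. -/
noncomputable def faceQuotient (ν : ℕ) (z : (ℝ × ℝ) × ℝ) : ℝ :=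
  E.quotient ν (E.minWeight ν) (z.1.1, z.2 + z.1.2)

lemma analyticAt_faceQuotient {ν : ℕ} (hν : ν ≠ 0) (c : ℝ) :
    AnalyticAt ℝ (E.faceQuotient ν) (0, c) := by
  have hfst : AnalyticAt ℝ (fun z : (ℝ × ℝ) × ℝ => z.1) (0, c) := analyticAt_fst
  refine AnalyticAt.fun_comp (f := fun z : (ℝ × ℝ) × ℝ => (z.1.1, z.2 + z.1.2)) ?_ ?_
  · simpa using E.analyticAt_quotient hν (E.minWeight ν) c
  · exact (AnalyticAt.fun_comp (f := fun z : (ℝ × ℝ) × ℝ => z.1) analyticAt_fst hfst).prod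
      (analyticAt_snd.add
        (AnalyticAt.fun_comp (f := fun z : (ℝ × ℝ) × ℝ => z.1) analyticAt_snd hfst))

lemma faceQuotient_zero {ν : ℕ} (hB : E.minWeight ν < ν * B) (c : ℝ) :
    E.faceQuotient ν (0, c) = (E.face ν).eval c := by
  simpa [faceQuotient] using E.quotient_minWeight_zero hB c

lemma eventually_faceQuotient {ν : ℕ} (hν : ν ≠ 0) (hB : E.minWeight ν < ν * B) {K : Set ℝ}
    (hK : IsCompact K) (hface : ∀ c ∈ K, (E.face ν).eval c ≠ 0) (κ e : ℝ) (α : ℚ) {η : ℝ}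
    (hη : 0 < η) :
    ∀ᶠ w in 𝓝 (0 : ℝ × ℝ), ∀ c ∈ K, AnalyticAt ℝ (E.faceQuotient ν) (w, c) ∧
      (w.1, w.1 ^ ν * (c + w.2)) ∈ E.domain ∧
      EulerClose (diagMap κ e 0) 0 (E.faceQuotient ν) α 0 ((E.face ν).eval c) η (w, c) := by
  refine hK.eventually_forall_of_forall_eventually fun c hc => ?_
  have hcont : Continuous fun z : (ℝ × ℝ) × ℝ => (z.1.1, z.1.1 ^ ν * (z.2 + z.1.2)) := by fun_prop
  have hdomain := (hcont.tendsto' (0, c) 0 (by simp [zero_pow hν])).eventually E.eq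
  have hclose := eventually_eulerClose (Λ₁ := diagMap κ e 0) (Λ₂ := 0)
    (E.analyticAt_faceQuotient hν c) (by simp) (by simp) (d := fun z => (E.face ν).eval z.2)
    ((E.face ν).continuous.continuousAt.comp continuousAt_snd) (E.faceQuotient_zero hB c).symm
    (by rw [E.faceQuotient_zero hB]; exact hface c hc) α 0 hη
  filter_upwards [(E.analyticAt_faceQuotient hν c).eventually_analyticAt, hdomain, hclose]
    with z hz hdom hcl
  exact ⟨hz, hdom, hcl⟩

variable {N : ℕ} {F : ℝ × ℝ → ℝ} {a e : ℝ}

lemma shear_eq_rpow_mul_faceQuotient {ν : ℕ} (hN : N ≠ 0) (he : (N : ℝ) * e = ν)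
    (hB : E.minWeight ν < ν * B)
    (hF : ∀ q : ℝ × ℝ, 0 < q.1 → q.1 < a → F q = Q (q.1 ^ (N : ℝ)⁻¹, q.2))
    {c : ℝ} {q : ℝ × ℝ} (hq : 0 < q.1) (hqa : q.1 < a)
    (hdom : (q.1 ^ (N : ℝ)⁻¹, (q.1 ^ (N : ℝ)⁻¹) ^ ν * (c + q.2 * q.1 ^ (-e))) ∈ E.domain) :
    F (shear 1 (fun x => c * x ^ e) q) =
      q.1 ^ (((E.minWeight ν : ℚ) / N : ℚ) : ℝ) *
        E.faceQuotient ν (faceChart (N : ℝ)⁻¹ e c q) := by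
  have hpt : shear 1 (fun x => c * x ^ e) q = (q.1, q.1 ^ e * (c + q.2 * q.1 ^ (-e))) := by
    rw [shear, mul_add, rpow_mul_mul_rpow_neg hq, one_mul, add_comm, mul_comm c]
  have hQ := E.eq_pow_mul_quotient (fun k => E.minWeight_le ν) hB.le hdom
  rw [root_pow_eq_rpow hN he hq.le] at hQ
  rw [hpt, hF (q.1, q.1 ^ (e:ℝ) * (c + q.2 * q.1 ^ (-(e:ℝ)))) hq hqa, rpow_ratCast_div hq.le]
  exact hQ

lemma exists_monomialOn_axisRegion {ν : ℕ} (hν : ν ≠ 0) (hN : N ≠ 0) (he : (N : ℝ) * e = ν)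
    (hB : E.minWeight ν < ν * B) {K : Set ℝ} (hK : IsCompact K)
    (hface : ∀ c ∈ K, (E.face ν).eval c ≠ 0) {η : ℝ} (hη : 0 < η) (ha : 0 < a)
    (hF : ∀ q : ℝ × ℝ, 0 < q.1 → q.1 < a → F q = Q (q.1 ^ (N : ℝ)⁻¹, q.2)) :
    ∃ ρ > 0, ∀ c ∈ K, MonomialOn (fun q => F (shear 1 (fun x => c * x ^ e) q)) (axisRegion e ρ)
      ((E.minWeight ν : ℚ) / N) 0 ((E.face ν).eval c) η := by
  obtain ⟨r, hr, hball⟩ := Metric.eventually_nhds_iff.1 (E.eventually_faceQuotient hν hB hK hface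
    (N : ℝ)⁻¹ (-e) ((E.minWeight ν : ℚ) / N) hη)
  set ρ := min r (min (r ^ N) a)
  have hρr : ρ ≤ r := min_le_left _ _
  have hρN : ρ ≤ r ^ N := (min_le_right _ _).trans (min_le_left _ _)
  have hρa : ρ ≤ a := (min_le_right _ _).trans (min_le_right _ _)
  refine ⟨ρ, by positivity, fun c hc => ?_⟩
  have hgood (q : ℝ × ℝ) (hq : q ∈ axisRegion e ρ) :=
    hball (dist_root_mul_rpow_neg_lt hN hr hρr hρN hq) c hc
  refine EulerForm.monomialOn (Λ₁ := diagMap (N : ℝ)⁻¹ (-e) 0) (Λ₂ := 0)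
    (ζ := faceChart (N : ℝ)⁻¹ e c) (Φ := E.faceQuotient ν) ?_ fun q hq => (hgood q hq).2.2
  exact {
    isOpen := isOpen_axisRegion (nonneg_of_natCast_mul_eq_natCast hN he) ρ
    fst_pos := fun q hq => hq.1
    snd_pos := fun h => absurd rfl h
    analyticAt_chart := fun q hq => analyticAt_faceChart hq.1
    analyticAt := fun q hq => (hgood q hq).1
    eq := fun q hq => by
      rw [pow_zero, mul_one]
      exact E.shear_eq_rpow_mul_faceQuotient hN he hB hF hq.1 (hq.2.1.trans_le hρa)
        (hgood q hq).2.1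
    hasDerivAt_fst := fun q hq => hasDerivAt_faceChart hq.1
    hasDerivAt_snd := fun h => absurd rfl h }

/-- The quotient of `Q` by its monomial of index `b`, as a function of `t`, `y / t^n` and
`t^n' / y`. -/
noncomputable def vertexQuotient (n n' b : ℕ) (z : (ℝ × ℝ) × ℝ) : ℝ :=
  ∑ k ∈ E.s, (if b ≤ k then z.1.2 ^ (k - b) * z.1.1 ^ (E.o k + n * (k - b) - E.o b)
    else z.2 ^ (b - k) * z.1.1 ^ (E.o k - E.o b - n' * (b - k))) * E.a k z.1.1 +
    z.1.2 ^ (B - b) * z.1.1 ^ (n * (B - b) - E.o b) * E.U (z.1.1, z.1.1 ^ n * z.1.2)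

lemma analyticAt_vertexQuotient {n : ℕ} (hn : n ≠ 0) (n' b : ℕ) :
    AnalyticAt ℝ (E.vertexQuotient n n' b) 0 := by
  have hfst : AnalyticAt ℝ (fun z : (ℝ × ℝ) × ℝ => z.1) 0 := analyticAt_fst
  have ht : AnalyticAt ℝ (fun z : (ℝ × ℝ) × ℝ => z.1.1) 0 :=
    AnalyticAt.fun_comp (f := fun z : (ℝ × ℝ) × ℝ => z.1) analyticAt_fst hfst
  have hu : AnalyticAt ℝ (fun z : (ℝ × ℝ) × ℝ => z.1.2) 0 :=
    AnalyticAt.fun_comp (f := fun z : (ℝ × ℝ) × ℝ => z.1) analyticAt_snd hfst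
  have hv : AnalyticAt ℝ (fun z : (ℝ × ℝ) × ℝ => z.2) 0 := analyticAt_snd
  have hU : AnalyticAt ℝ (fun z : (ℝ × ℝ) × ℝ => E.U (z.1.1, z.1.1 ^ n * z.1.2)) 0 :=
    AnalyticAt.fun_comp (f := fun z : (ℝ × ℝ) × ℝ => (z.1.1, z.1.1 ^ n * z.1.2))
      (by simpa [zero_pow hn, ← Prod.zero_eq_mk] using E.analyticAt_U)
      (ht.prod ((ht.pow n).mul hu))
  refine AnalyticAt.add (Finset.analyticAt_fun_sum _ fun k hk => AnalyticAt.mul ?_ ?_)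
    (((hu.pow _).mul (ht.pow _)).mul hU)
  · split_ifs
    · exact (hu.pow _).mul (ht.pow _)
    · exact (hv.pow _).mul (ht.pow _)
  · exact AnalyticAt.fun_comp (f := fun z : (ℝ × ℝ) × ℝ => z.1.1) (E.analyticAt_a k hk) ht

lemma vertexQuotient_zero {n n' b : ℕ} (hb : b ∈ E.s) :
    E.vertexQuotient n n' b 0 = E.a b 0 := by
  have hB : B - b ≠ 0 := Nat.sub_ne_zero_of_lt (E.lt b hb)
  rw [vertexQuotient]
  simp only [Prod.fst_zero, Prod.snd_zero, zero_pow hB, zero_mul, add_zero]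
  rw [Finset.sum_eq_single_of_mem b hb]
  · simp
  · intro k _ hkb
    split_ifs
    all_goals rw [zero_pow (by omega), zero_mul, zero_mul]

end NewtonExpansion

section VertexMonomial

variable {t u y v : ℝ} {n n' p q b k : ℕ}

lemma pow_mul_pow_eq_vertex_mul_of_le (hbk : b ≤ k) (h : p + n * b ≤ q + n * k) :
    (t ^ n * u) ^ k * t ^ q =
      t ^ p * (t ^ n * u) ^ b * (u ^ (k - b) * t ^ (q + n * (k - b) - p)) := by
  obtain ⟨i, rfl⟩ := Nat.exists_eq_add_of_le hbk
  have hp : p ≤ q + n * i := by nlinarith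
  have hpow : t ^ p * t ^ (q + n * i - p) = t ^ q * (t ^ n) ^ i := by
    rw [← pow_add, Nat.add_sub_cancel' hp, pow_add, pow_mul]
  rw [Nat.add_sub_cancel_left, pow_add (t ^ n * u) b i, mul_pow (t ^ n) u i]
  linear_combination (-((t ^ n * u) ^ b * u ^ i)) * hpow

lemma pow_mul_pow_eq_vertex_mul_of_ge (hkb : k ≤ b) (h : p + n' * b ≤ q + n' * k)
    (hv : y * v = t ^ n') :
    y ^ k * t ^ q = t ^ p * y ^ b * (v ^ (b - k) * t ^ (q - p - n' * (b - k))) := by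
  obtain ⟨i, rfl⟩ := Nat.exists_eq_add_of_le hkb
  have hp : p + n' * i ≤ q := by nlinarith
  have hpow : t ^ p * ((y * v) ^ i * t ^ (q - p - n' * i)) = t ^ q := by
    rw [hv, ← pow_mul, ← pow_add, ← pow_add, Nat.sub_sub, ← add_assoc, Nat.add_sub_cancel' hp]
  rw [mul_pow] at hpow
  rw [Nat.add_sub_cancel_left, pow_add y k i]
  linear_combination (-(y ^ k)) * hpow

end VertexMonomial

namespace NewtonExpansion

variable {Q : ℝ × ℝ → ℝ} {B : ℕ} (E : NewtonExpansion Q B) {N n n' b : ℕ} {F : ℝ × ℝ → ℝ}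
  {a e m ε : ℝ}

lemma eq_vertex_mul_vertexQuotient (hb : b ∈ E.s) (hbn : E.o b + n * b = E.minWeight n)
    (hB : E.minWeight n < n * B) {t u v : ℝ}
    (hlow : ∀ k ∈ E.s, k < b → E.o b + n' * b ≤ E.o k + n' * k ∧ t ^ n * u * v = t ^ n')
    (h : (t, t ^ n * u) ∈ E.domain) :
    Q (t, t ^ n * u) = t ^ E.o b * (t ^ n * u) ^ b * E.vertexQuotient n n' b ((t, u), v) := by
  rw [show Q (t, t ^ n * u) = _ from h, vertexQuotient, mul_add, Finset.mul_sum]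
  congr 1
  · refine Finset.sum_congr rfl fun k hk => ?_
    rw [← mul_assoc, ← mul_assoc]
    congr 1
    split_ifs with hbk
    · exact pow_mul_pow_eq_vertex_mul_of_le hbk (hbn.trans_le (E.minWeight_le n hk))
    · obtain ⟨hle, hv⟩ := hlow k hk (not_le.1 hbk)
      exact pow_mul_pow_eq_vertex_mul_of_ge (not_le.1 hbk).le hle hv
  · have hrem := pow_mul_pow_eq_vertex_mul_of_le (t := t) (u := u) (q := 0) (E.lt b hb).le
      (by rw [hbn, zero_add]; exact hB.le)
    rw [pow_zero, mul_one, zero_add] at hrem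
    rw [← mul_assoc]
    exact congrArg (· * _) hrem

lemma eventually_vertexQuotient (hn : n ≠ 0) (hb : b ∈ E.s) (n' : ℕ) (κ μ m : ℝ) (α : ℚ) {η : ℝ}
    (hη : 0 < η) :
    ∀ᶠ z in 𝓝 (0 : (ℝ × ℝ) × ℝ), AnalyticAt ℝ (E.vertexQuotient n n' b) z ∧
      (z.1.1, z.1.1 ^ n * z.1.2) ∈ E.domain ∧
      EulerClose (diagMap κ μ m) (diagMap 0 1 (-1)) (E.vertexQuotient n n' b) α b (E.a b 0) η
        z := by
  have hΦ := E.analyticAt_vertexQuotient hn n' b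
  have hΦ0 : E.vertexQuotient n n' b 0 = E.a b 0 := E.vertexQuotient_zero hb
  have hcont : Continuous fun z : (ℝ × ℝ) × ℝ => (z.1.1, z.1.1 ^ n * z.1.2) := by fun_prop
  have hdomain := (hcont.tendsto' 0 0 (by simp [← Prod.zero_eq_mk])).eventually E.eq
  have hclose := eventually_eulerClose (Λ₁ := diagMap κ μ m) (Λ₂ := diagMap 0 1 (-1)) hΦ
    (map_zero _) (map_zero _) (d := fun _ => E.a b 0) continuousAt_const hΦ0.symm
    (by rw [hΦ0]; exact E.a_ne b hb) α b hη
  filter_upwards [hΦ.eventually_analyticAt, hdomain, hclose] with z hz hdom hcl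
  exact ⟨hz, hdom, hcl⟩

lemma eq_rpow_mul_vertexQuotient (hN : N ≠ 0) (he : (N : ℝ) * e = n) (hm : (N : ℝ) * m = n')
    (hb : b ∈ E.s) (hbn : E.o b + n * b = E.minWeight n) (hB : E.minWeight n < n * B)
    (hlow : ∀ k ∈ E.s, k < b → ε = 1 ∧ E.o b + n' * b ≤ E.o k + n' * k)
    (hF : ∀ q : ℝ × ℝ, 0 < q.1 → q.1 < a → F q = Q (q.1 ^ (N : ℝ)⁻¹, q.2))
    {q : ℝ × ℝ} (hq : 0 < q.1) (hqa : q.1 < a) (hq2 : q.2 ≠ 0)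
    (hdom : (q.1 ^ (N : ℝ)⁻¹, (q.1 ^ (N : ℝ)⁻¹) ^ n * (q.2 * q.1 ^ (-e))) ∈ E.domain) :
    F q = q.1 ^ (((E.o b : ℚ) / N : ℚ) : ℝ) * q.2 ^ b *
      E.vertexQuotient n n' b (vertexChart (N : ℝ)⁻¹ e m ε q) := by
  have hy : (q.1 ^ (N : ℝ)⁻¹) ^ n * (q.2 * q.1 ^ (-e)) = q.2 := by
    rw [root_pow_eq_rpow hN he hq.le, rpow_mul_mul_rpow_neg hq]
  have hQ := E.eq_vertex_mul_vertexQuotient (n' := n') (v := ε * q.2⁻¹ * q.1 ^ m) hb hbn hB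
    (fun k hk hkb => ⟨(hlow k hk hkb).2, by
      rw [hy, (hlow k hk hkb).1, one_mul, root_pow_eq_rpow hN hm hq.le, mul_inv_cancel_left₀ hq2]⟩)
    hdom
  rw [hy] at hQ
  rw [hF q hq hqa, rpow_ratCast_div hq.le]
  exact hQ

lemma exists_monomialOn_vertexRegion (hn : n ≠ 0) (hN : N ≠ 0) (he : (N : ℝ) * e = n)
    (hm : (N : ℝ) * m = n') (hε : 0 ≤ ε) (hb : b ∈ E.s) (hbn : E.o b + n * b = E.minWeight n)
    (hB : E.minWeight n < n * B)
    (hlow : ∀ k ∈ E.s, k < b → ε = 1 ∧ E.o b + n' * b ≤ E.o k + n' * k)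
    {η : ℝ} (hη : 0 < η) (ha : 0 < a)
    (hF : ∀ q : ℝ × ℝ, 0 < q.1 → q.1 < a → F q = Q (q.1 ^ (N : ℝ)⁻¹, q.2)) :
    ∃ ρ > 0, MonomialOn F (vertexRegion e m ε ρ) ((E.o b : ℚ) / N) b (E.a b 0) η := by
  obtain ⟨r, hr, hball⟩ := Metric.eventually_nhds_iff.1 (E.eventually_vertexQuotient hn hb n'
    (N : ℝ)⁻¹ (-e) m ((E.o b : ℚ) / N) hη)
  set ρ := min r (min (r ^ N) a)
  have hρr : ρ ≤ r := min_le_left _ _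
  have hρN : ρ ≤ r ^ N := (min_le_right _ _).trans (min_le_left _ _)
  have hρa : ρ ≤ a := (min_le_right _ _).trans (min_le_right _ _)
  have hgood (q : ℝ × ℝ) (hq : q ∈ vertexRegion e m ε ρ) :=
    hball (dist_vertexChart_lt hN hr hρr hρN hε hq)
  refine ⟨ρ, by positivity, EulerForm.monomialOn (Λ₁ := diagMap (N : ℝ)⁻¹ (-e) m)
    (Λ₂ := diagMap 0 1 (-1)) (ζ := vertexChart (N : ℝ)⁻¹ e m ε) (Φ := E.vertexQuotient n n' b) ?_
    fun q hq => (hgood q hq).2.2⟩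
  exact {
    isOpen := isOpen_vertexRegion (nonneg_of_natCast_mul_eq_natCast hN he)
      (nonneg_of_natCast_mul_eq_natCast hN hm) ε ρ
    fst_pos := fun q hq => hq.1
    snd_pos := fun _ q hq => hq.2.2.1
    analyticAt_chart := fun q hq => analyticAt_vertexChart hq.1 hq.2.2.1
    analyticAt := fun q hq => (hgood q hq).1
    eq := fun q hq => E.eq_rpow_mul_vertexQuotient hN he hm hb hbn hB hlow hF hq.1
      (hq.2.1.trans_le hρa) hq.2.2.1.ne' (hgood q hq).2.1
    hasDerivAt_fst := fun q hq => hasDerivAt_vertexChart_fst hq.1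
    hasDerivAt_snd := fun _ q hq => hasDerivAt_vertexChart_snd hq.2.2.1 }

end NewtonExpansion

/-! ### Leading terms and Puiseux functions -/

namespace LeadingTerm

variable {k k' : ℝ → ℝ} {l l' s s' c : ℝ}

lemma congr' (h : LeadingTerm k l s) (hk : ∀ᶠ x in 𝓝[>] (0 : ℝ), k x = k' x) :
    LeadingTerm k' l s :=
  Tendsto.congr' (hk.mono fun x hx => by simp only [hx]) h

lemma eventually_lt (h : LeadingTerm k l s) (hc : l < c) :
    ∀ᶠ x in 𝓝[>] (0 : ℝ), k x < c * x ^ s := by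
  filter_upwards [h.eventually (gt_mem_nhds hc), self_mem_nhdsWithin] with x hx hx0
  exact (div_lt_iff₀ (Real.rpow_pos_of_pos hx0 s)).1 hx

lemma eventually_gt (h : LeadingTerm k l s) (hc : c < l) :
    ∀ᶠ x in 𝓝[>] (0 : ℝ), c * x ^ s < k x := by
  filter_upwards [h.eventually (lt_mem_nhds hc), self_mem_nhdsWithin] with x hx hx0
  exact (lt_div_iff₀ (Real.rpow_pos_of_pos hx0 s)).1 hx

lemma of_lt (h : LeadingTerm k l s) (hs : s' < s) : LeadingTerm k 0 s' := by
  have hmul := Tendsto.mul h (tendsto_rpow_nhdsGT_zero (sub_pos.2 hs))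
  rw [mul_zero] at hmul
  refine hmul.congr' ?_
  filter_upwards [self_mem_nhdsWithin] with x hx
  have hs0 := (Real.rpow_pos_of_pos hx s).ne'
  have hs'0 := (Real.rpow_pos_of_pos hx s').ne'
  rw [Real.rpow_sub hx]
  field_simp

lemma sub (h : LeadingTerm k l s) (h' : LeadingTerm k' l' s) :
    LeadingTerm (fun x => k x - k' x) (l - l') s :=
  (Tendsto.sub h h').congr fun x => by ring

lemma unique (h : LeadingTerm k l s) (h' : LeadingTerm k l' s) : l = l' :=
  tendsto_nhds_unique h h'

lemma exponent_unique (h : LeadingTerm k l s) (h' : LeadingTerm k l' s') (hl : l ≠ 0)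
    (hl' : l' ≠ 0) : s = s' := by
  rcases lt_trichotomy s s' with hs | hs | hs
  · exact absurd (h.unique (h'.of_lt hs)) hl
  · exact hs
  · exact absurd (h'.unique (h.of_lt hs)) hl'

lemma exponent_lt (h : LeadingTerm k 0 s) (h' : LeadingTerm k l' s') (hl' : l' ≠ 0) : s < s' := by
  rcases lt_trichotomy s s' with hs | rfl | hs
  · exact hs
  · exact absurd (h'.unique h) hl'
  · exact absurd (h'.unique (h.of_lt hs)) hl'

lemma monomial (c s : ℝ) : LeadingTerm (fun x => c * x ^ s) c s := by
  refine tendsto_const_nhds.congr' ?_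
  filter_upwards [self_mem_nhdsWithin] with x hx
  rw [mul_div_cancel_right₀ _ (Real.rpow_pos_of_pos hx s).ne']

lemma zero (s : ℝ) : LeadingTerm (fun _ => 0) 0 s := by
  simp [LeadingTerm]

lemma tendsto_zero (h : LeadingTerm k l s) (hs : 0 < s) : Tendsto k (𝓝[>] 0) (𝓝 0) := by
  simpa [LeadingTerm] using h.of_lt hs

end LeadingTerm

lemma tendsto_pow_nhdsGT_zero {N : ℕ} (hN : N ≠ 0) :
    Tendsto (fun t : ℝ => t ^ N) (𝓝[>] 0) (𝓝[>] 0) := by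
  refine tendsto_nhdsWithin_iff.2 ⟨?_, ?_⟩
  · exact ((continuous_pow N).tendsto' 0 0 (zero_pow hN)).mono_left nhdsWithin_le_nhds
  · filter_upwards [self_mem_nhdsWithin] with t ht
    exact pow_pos (mem_Ioi.1 ht) N

lemma tendsto_root_nhdsGT_zero {N : ℕ} (hN : N ≠ 0) :
    Tendsto (fun x : ℝ => x ^ (N : ℝ)⁻¹) (𝓝[>] 0) (𝓝[>] 0) := by
  refine tendsto_nhdsWithin_iff.2 ⟨?_, ?_⟩
  · exact tendsto_rpow_nhdsGT_zero (inv_pos.2 (Nat.cast_pos.2 (Nat.pos_of_ne_zero hN)))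
  · filter_upwards [self_mem_nhdsWithin] with t ht
    exact Real.rpow_pos_of_pos (mem_Ioi.1 ht) _

namespace PuiseuxOn

variable {N : ℕ} {a a' : ℝ} {k k' : ℝ → ℝ}

lemma mono (h : PuiseuxOn N a k) (ha : a' ≤ a) : PuiseuxOn N a' k := by
  obtain ⟨K, hK, he⟩ := h
  exact ⟨K, hK.mono fun t ht => ⟨ht.1, ht.2.trans ha⟩, fun t h0 ht => he t h0 (ht.trans ha)⟩

lemma sub (h : PuiseuxOn N a k) (h' : PuiseuxOn N a k') :
    PuiseuxOn N a (fun x => k x - k' x) := by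
  obtain ⟨K, hK, he⟩ := h
  obtain ⟨K', hK', he'⟩ := h'
  exact ⟨fun t => K t - K' t, fun t ht => (hK t ht).sub (hK' t ht),
    fun t h0 ht => by simp only [he t h0 ht, he' t h0 ht]⟩

lemma monomial {e : ℝ} {ν : ℕ} (he : (N : ℝ) * e = ν) (c : ℝ) :
    PuiseuxOn N a (fun x => c * x ^ e) :=
  ⟨fun t => c * t ^ ν, fun _ _ => analyticAt_const.mul (analyticAt_id.pow ν),
    fun t h0 _ => by simp only [pow_rpow_eq_pow he h0]⟩

lemma eventually_eq_zero_or_leadingTerm (h : PuiseuxOn N a k) (hN : N ≠ 0) (ha : 0 < a) :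
    (∀ᶠ x in 𝓝[>] (0 : ℝ), k x = 0) ∨ ∃ (n : ℕ) (l : ℝ), l ≠ 0 ∧ LeadingTerm k l (n / N) := by
  obtain ⟨K, hK, he⟩ := h
  have hroot : ∀ᶠ x in 𝓝[>] (0 : ℝ), k x = K (x ^ (N : ℝ)⁻¹) := by
    filter_upwards [Ioo_mem_nhdsGT ha] with x hx
    have hpow := Real.rpow_inv_natCast_pow hx.1.le hN
    rw [← he _ (Real.rpow_nonneg hx.1.le _) (hpow.trans_le hx.2.le), hpow]
  have hlim : Tendsto (fun x : ℝ => x ^ (N : ℝ)⁻¹) (𝓝[>] 0) (𝓝 0) :=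
    (tendsto_root_nhdsGT_zero hN).mono_right nhdsWithin_le_nhds
  have hK0 : AnalyticAt ℝ K 0 := hK 0 ⟨le_rfl, by simp [zero_pow hN, ha.le]⟩
  by_cases hzero : ∀ᶠ t in 𝓝 (0 : ℝ), K t = 0
  · left
    filter_upwards [hroot, hlim.eventually hzero] with x hx hKx
    rw [hx, hKx]
  · obtain ⟨n, g, hg, hg0, hfac⟩ := hK0.exists_eventuallyEq_pow_smul_nonzero_iff.2 hzero
    refine Or.inr ⟨n, g 0, hg0, (hg.continuousAt.tendsto.comp hlim).congr' ?_⟩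
    filter_upwards [hroot, hlim.eventually hfac, self_mem_nhdsWithin] with x hx hKx hx0
    have hNn : (N : ℝ) * (n / N) = n := mul_div_cancel₀ _ (Nat.cast_ne_zero.2 hN)
    rw [Function.comp_apply, hx, hKx, sub_zero, smul_eq_mul,
      root_pow_eq_rpow hN hNn (mem_Ioi.1 hx0).le,
      mul_div_cancel_left₀ _ (Real.rpow_pos_of_pos hx0 _).ne']

lemma exists_nat_eq_mul_exponent (h : PuiseuxOn N a k) (hN : N ≠ 0) (ha : 0 < a) {l s : ℝ}
    (hl : l ≠ 0) (hk : LeadingTerm k l s) : ∃ n : ℕ, (N : ℝ) * s = n := by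
  rcases h.eventually_eq_zero_or_leadingTerm hN ha with hzero | ⟨n, l', hl', hlead⟩
  · exact absurd ((hk.congr' hzero).unique (LeadingTerm.zero s)) hl
  · refine ⟨n, ?_⟩
    rw [hk.exponent_unique hlead hl hl', mul_div_cancel₀ _ (Nat.cast_ne_zero.2 hN)]

end PuiseuxOn

namespace TriangleResolution

variable {P : ℝ × ℝ → ℝ} {b η : ℝ} (R : TriangleResolution P b η) (i : Fin R.n)

/-- The real analytic function `t ↦ k i (t^N)`, extended to a neighborhood of `0`. -/
noncomputable def shiftRoot : ℝ → ℝ := (R.k_puiseux i).choose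

lemma shiftRoot_eq {t : ℝ} (h0 : 0 ≤ t) (ht : t ^ R.N ≤ R.a) : R.k i (t ^ R.N) = R.shiftRoot i t :=
  (R.k_puiseux i).choose_spec.2 t h0 ht

lemma analyticAt_shiftRoot : AnalyticAt ℝ (R.shiftRoot i) 0 :=
  (R.k_puiseux i).choose_spec.1 0 ⟨le_rfl, by simp [zero_pow R.N_pos.ne', R.a_pos.le]⟩

lemma shiftRoot_zero : R.shiftRoot i 0 = 0 := by
  obtain ⟨l, s, hs, hk⟩ := R.k_order i
  have hpow := tendsto_pow_nhdsGT_zero R.N_pos.ne'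
  have hzero := (hk.tendsto_zero (zero_lt_one.trans_le hs)).comp hpow
  have hcont : Tendsto (R.shiftRoot i) (𝓝[>] 0) (𝓝 (R.shiftRoot i 0)) :=
    (R.analyticAt_shiftRoot i).continuousAt.tendsto.mono_left nhdsWithin_le_nhds
  refine tendsto_nhds_unique hcont (hzero.congr' ?_)
  filter_upwards [hpow.eventually (Ioo_mem_nhdsGT R.a_pos), self_mem_nhdsWithin] with t ht ht0
  exact R.shiftRoot_eq i (le_of_lt ht0) ht.2.le

/-- The function `S` in the coordinates `(t, y)` of the `i`-th domain, where `x = t^N`. -/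
noncomputable def pullback (S : ℝ × ℝ → ℝ) (z : ℝ × ℝ) : ℝ :=
  S (z.1 ^ R.N, R.σ i * z.2 + R.shiftRoot i z.1)

lemma analyticAt_pullback {S : ℝ × ℝ → ℝ} (hS : AnalyticAt ℝ S 0) :
    AnalyticAt ℝ (R.pullback i S) 0 := by
  refine AnalyticAt.fun_comp
    (f := fun z : ℝ × ℝ => (z.1 ^ R.N, R.σ i * z.2 + R.shiftRoot i z.1)) ?_ ?_
  · simpa [zero_pow R.N_pos.ne', R.shiftRoot_zero i, ← Prod.zero_eq_mk] using hS
  · exact (analyticAt_fst.pow _).prod ((analyticAt_const.mul analyticAt_snd).add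
      (AnalyticAt.fun_comp (f := fun z : ℝ × ℝ => z.1) (R.analyticAt_shiftRoot i) analyticAt_fst))

lemma comp_shear_eq_pullback (S : ℝ × ℝ → ℝ) {q : ℝ × ℝ} (h0 : 0 < q.1) (h : q.1 < R.a) :
    S (shear (R.σ i) (R.k i) q) = R.pullback i S (q.1 ^ (R.N : ℝ)⁻¹, q.2) := by
  have hpow := Real.rpow_inv_natCast_pow h0.le R.N_pos.ne'
  have hroot := R.shiftRoot_eq i (Real.rpow_nonneg h0.le (R.N : ℝ)⁻¹) (hpow.trans_le h.le)
  rw [hpow] at hroot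
  simp only [pullback, shear, hpow, hroot]

/-- The exponents `e` allowed in the additional coordinate changes `(x, y) ↦ (x, y - c x^e)`. -/
def IsShiftExponent (e : ℝ) : Prop :=
  e = R.M i ∨ (e = R.m i ∧ ¬ ∀ x ∈ Ioo 0 R.a, R.g i x = 0)

variable {R i}

lemma h_pos_and_leadingTerm_g (hg : ¬ ∀ x ∈ Ioo 0 R.a, R.g i x = 0) :
    0 < R.h i ∧ R.M i < R.m i ∧ LeadingTerm (R.g i) (R.h i) (R.m i) :=
  (R.g_of_pos i (Nat.pos_of_ne_zero fun h0 => hg (R.g_of_zero i h0))).resolve_left hg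

lemma IsShiftExponent.one_le {e : ℝ} (he : R.IsShiftExponent i e) : 1 ≤ e := by
  rcases he with rfl | ⟨rfl, hg⟩
  · exact R.one_le_M i
  · exact (R.one_le_M i).trans (h_pos_and_leadingTerm_g hg).2.1.le

lemma IsShiftExponent.exists_nat {e : ℝ} (he : R.IsShiftExponent i e) :
    ∃ ν : ℕ, (R.N : ℝ) * e = ν := by
  rcases he with rfl | ⟨rfl, hg⟩
  · exact (R.G_puiseux i).exists_nat_eq_mul_exponent R.N_pos.ne' R.a_pos (R.H_pos i).ne'
      (R.G_lead i)
  · obtain ⟨hh, -, hlead⟩ := h_pos_and_leadingTerm_g hg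
    exact (R.g_puiseux i).exists_nat_eq_mul_exponent R.N_pos.ne' R.a_pos hh.ne' hlead

lemma IsShiftExponent.nat_ne_zero {e : ℝ} {ν : ℕ} (he : R.IsShiftExponent i e)
    (hν : (R.N : ℝ) * e = ν) : ν ≠ 0 := by
  rintro rfl
  have hpos := mul_pos (Nat.cast_pos.2 R.N_pos) (zero_lt_one.trans_le he.one_le)
  exact hpos.ne' (hν.trans Nat.cast_zero)

lemma eventually_zero_eq_g (hg : ∀ x ∈ Ioo 0 R.a, R.g i x = 0) :
    ∀ᶠ x in 𝓝[>] (0 : ℝ), 0 = R.g i x := by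
  filter_upwards [Ioo_mem_nhdsGT R.a_pos] with x hx
  exact (hg x hx).symm

variable (R i)

lemma leadingTerm_g_zero_M : LeadingTerm (R.g i) 0 (R.M i) := by
  by_cases hg : ∀ x ∈ Ioo 0 R.a, R.g i x = 0
  · exact (LeadingTerm.zero _).congr' (eventually_zero_eq_g hg)
  · obtain ⟨-, hMm, hlead⟩ := h_pos_and_leadingTerm_g hg
    exact hlead.of_lt hMm

lemma eventually_mul_rpow_lt_G {μ : ℝ} (hμ : R.M i < μ) (u : ℝ) :
    ∀ᶠ x in 𝓝[>] (0 : ℝ), u * x ^ μ < R.G i x := by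
  filter_upwards [((LeadingTerm.monomial u μ).of_lt hμ).eventually_lt (half_pos (R.H_pos i)),
    (R.G_lead i).eventually_gt (half_lt_self (R.H_pos i))] with x hux hGx
  exact hux.trans hGx

lemma curveComparable_pullback {ν : ℕ} {μ u : ℝ} (hμ : (R.N : ℝ) * μ = ν)
    (hu : ∀ᶠ x in 𝓝[>] (0 : ℝ), R.g i x < u * x ^ μ ∧ u * x ^ μ < R.G i x) :
    CurveComparable (R.pullback i P) (R.d i) (R.N * R.α i + ν * R.β i) η (R.β i) ν u := by
  have hpow := tendsto_pow_nhdsGT_zero R.N_pos.ne'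
  filter_upwards [hpow.eventually hu, hpow.eventually (Ioo_mem_nhdsGT R.a_pos),
    self_mem_nhdsWithin] with t hut hta ht
  replace ht : 0 < t := ht
  have hcurve : u * (t ^ R.N) ^ μ = t ^ ν * u := by rw [pow_rpow_eq_pow hμ ht.le, mul_comm]
  rw [hcurve] at hut
  have hvalue : P (shear (R.σ i) (R.k i) (t ^ R.N, t ^ ν * u)) =
      R.pullback i P (t, t ^ ν * u) := by
    rw [R.comp_shear_eq_pullback i P (q := (t ^ R.N, t ^ ν * u)) hta.1 hta.2,
      Real.pow_rpow_inv_natCast ht.le R.N_pos.ne']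
  have hmonomial : (t ^ R.N) ^ (R.α i : ℝ) * (t ^ ν * u) ^ R.β i =
      t ^ ((R.N : ℝ) * R.α i + ν * R.β i) * u ^ R.β i := by
    rw [Real.rpow_add ht, Real.rpow_mul ht.le, Real.rpow_natCast, mul_pow, ← pow_mul,
      ← Nat.cast_mul, Real.rpow_natCast]
    ring
  have hcomp := (R.monomial i (t ^ R.N, t ^ ν * u) ⟨hta.1, hta.2, hut.1, hut.2⟩).2 0
    (by simpa using R.α_nonneg i) 0 (Nat.zero_le _)
  simpa [pderiv2, descProd, mul_assoc, hvalue, hmonomial] using hcomp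

end TriangleResolution

/-! ### Chains of pieces -/

lemma shear_image_sliverSet (a : ℝ) (k lo hi : ℝ → ℝ) :
    shear 1 k '' sliverSet a (fun x => lo x - k x) (fun x => hi x - k x) = sliverSet a lo hi := by
  ext ⟨x, y⟩
  constructor
  · rintro ⟨⟨x', y'⟩, ⟨hx0, hxa, hlo, hhi⟩, h⟩
    simp only [shear, one_mul, Prod.mk.injEq] at h
    obtain ⟨rfl, rfl⟩ := h
    exact ⟨hx0, hxa, sub_lt_iff_lt_add.1 hlo, lt_sub_iff_add_lt.1 hhi⟩
  · rintro ⟨hx0, hxa, hlo, hhi⟩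
    exact ⟨(x, y - k x), ⟨hx0, hxa, sub_lt_sub_right hlo _, sub_lt_sub_right hhi _⟩,
      by simp [shear]⟩

lemma mem_closure_sliverSet {a x y : ℝ} {lo hi : ℝ → ℝ} (hx : x ∈ Ioo 0 a) (hlt : lo x < hi x)
    (hy : y ∈ Icc (lo x) (hi x)) : (x, y) ∈ closure (sliverSet a lo hi) := by
  have hcl : y ∈ closure (Ioo (lo x) (hi x)) := by rwa [closure_Ioo hlt.ne]
  refine closure_mono ?_ (image_closure_subset_closure_image (f := fun y : ℝ => (x, y))
    (by fun_prop) (mem_image_of_mem _ hcl))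
  rintro _ ⟨w, hw, rfl⟩
  exact ⟨hx.1, hx.2, hw.1, hw.2⟩

lemma exists_fin_seq_of_reflTransGen {X : Type*} {p : X → X → Prop} {u v : X}
    (h : Relation.ReflTransGen p u v) :
    ∃ (L : ℕ) (φ : Fin (L + 1) → X), φ 0 = u ∧ φ (Fin.last L) = v ∧
      ∀ l : Fin L, p (φ l.castSucc) (φ l.succ) := by
  induction h with
  | refl => exact ⟨0, fun _ => u, rfl, rfl, Fin.elim0⟩
  | @tail v w _ hvw ih =>
    obtain ⟨L, φ, h0, hL, hφ⟩ := ih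
    refine ⟨L + 1, Fin.snoc φ w, ?_, Fin.snoc_last _ _, Fin.lastCases ?_ fun l => ?_⟩
    · rw [← Fin.castSucc_zero, Fin.snoc_castSucc, h0]
    · rwa [Fin.snoc_castSucc, Fin.succ_last, Fin.snoc_last, hL]
    · rw [Fin.snoc_castSucc, Fin.succ_castSucc, Fin.snoc_castSucc]
      exact hφ l

lemma exists_mem_Ioc_castSucc_succ {X : Type*} [LinearOrder X] {L : ℕ} {f : Fin (L + 1) → X}
    {y : X} (h0 : f 0 < y) (hL : y ≤ f (Fin.last L)) :
    ∃ l : Fin L, y ∈ Ioc (f l.castSucc) (f l.succ) := by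
  by_contra! hcon
  have hlt (l : Fin (L + 1)) : f l < y := by
    induction l using Fin.induction with
    | zero => exact h0
    | succ l ih => exact not_le.1 fun hle => hcon l ⟨ih, hle⟩
  exact (hlt _).not_ge hL

section Boundaries

variable {a : ℝ} {L : ℕ} {φ : Fin (L + 1) → ℝ → ℝ}

lemma boundaries_mono (hφ : ∀ l : Fin L, ∀ x ∈ Ioo 0 a, φ l.castSucc x < φ l.succ x) {x : ℝ}
    (hx : x ∈ Ioo 0 a) : Monotone fun l => φ l x :=
  Fin.monotone_iff_le_succ.2 fun l => (hφ l x hx).le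

lemma sliverSet_subset_of_boundaries
    (hφ : ∀ l : Fin L, ∀ x ∈ Ioo 0 a, φ l.castSucc x < φ l.succ x) (l : Fin L) :
    sliverSet a (φ l.castSucc) (φ l.succ) ⊆ sliverSet a (φ 0) (φ (Fin.last L)) :=
  fun _ ⟨hx0, hxa, hlo, hhi⟩ =>
    ⟨hx0, hxa, (boundaries_mono hφ ⟨hx0, hxa⟩ (Fin.zero_le _)).trans_lt hlo,
      hhi.trans_le (boundaries_mono hφ ⟨hx0, hxa⟩ (Fin.le_last _))⟩

lemma pairwise_disjoint_sliverSet
    (hφ : ∀ l : Fin L, ∀ x ∈ Ioo 0 a, φ l.castSucc x < φ l.succ x) :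
    Pairwise fun l l' : Fin L => Disjoint (sliverSet a (φ l.castSucc) (φ l.succ))
      (sliverSet a (φ l'.castSucc) (φ l'.succ)) := by
  have hdisj {l l' : Fin L} (hll' : l < l') :
      Disjoint (sliverSet a (φ l.castSucc) (φ l.succ))
        (sliverSet a (φ l'.castSucc) (φ l'.succ)) := by
    refine Set.disjoint_left.2 fun q ⟨hx0, hxa, _, hhi⟩ ⟨_, _, hlo', _⟩ => ?_
    have hle := boundaries_mono hφ ⟨hx0, hxa⟩ (Fin.succ_le_castSucc_iff.2 hll')
    exact (hle.trans_lt hlo').not_gt hhi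
  exact fun l l' hll' => hll'.lt_or_gt.elim hdisj fun h => (hdisj h).symm

lemma sliverSet_subset_iUnion_closure
    (hφ : ∀ l : Fin L, ∀ x ∈ Ioo 0 a, φ l.castSucc x < φ l.succ x) :
    sliverSet a (φ 0) (φ (Fin.last L)) ⊆
      ⋃ l : Fin L, closure (sliverSet a (φ l.castSucc) (φ l.succ)) := by
  rintro ⟨x, y⟩ ⟨hx0, hxa, hlo, hhi⟩
  obtain ⟨l, hl⟩ := exists_mem_Ioc_castSucc_succ (f := fun l => φ l x) hlo hhi.le
  exact mem_iUnion.2 ⟨l, mem_closure_sliverSet ⟨hx0, hxa⟩ (hφ l x ⟨hx0, hxa⟩)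
    (Ioc_subset_Icc_self hl)⟩

end Boundaries

/-- One piece of the division of the part `x < a₀` of the `i`-th domain: a region between the graphs
of `lo` and `hi` with a coordinate change `(x, y) ↦ (x, y - c x^e)` that carries it onto a domain
on which all `S j` are comparable to monomials. -/
structure MonomialPiece {ι : Type*} (S : ι → ℝ × ℝ → ℝ) {P : ℝ × ℝ → ℝ} {b η : ℝ}
    (R : TriangleResolution P b η) (i : Fin R.n) (η' a₀ : ℝ) (lo hi : ℝ → ℝ) where
  lt : ∀ x ∈ Ioo 0 a₀, lo x < hi x
  c : ℝ
  e : ℝ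
  H : ℝ
  M : ℝ
  h : ℝ
  m : ℝ
  α : ι → ℚ
  β : ι → ℕ
  d : ι → ℝ
  c_nonneg : 0 ≤ c
  isShiftExponent : R.IsShiftExponent i e
  lo_puiseux : PuiseuxOn R.N a₀ fun x => lo x - c * x ^ e
  hi_puiseux : PuiseuxOn R.N a₀ fun x => hi x - c * x ^ e
  hi_lead : LeadingTerm (fun x => hi x - c * x ^ e) H M
  lo_lead : LeadingTerm (fun x => lo x - c * x ^ e) h m
  one_le_M : 1 ≤ M
  M_lt_m : M < m
  h_nonneg : 0 ≤ h
  H_pos : 0 < H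
  lo_eq_or_h_pos : (∃ j, 0 < β j) ∨ (∀ x ∈ Ioo 0 R.a, R.g i x = 0) ∨
      (∀ᶠ x in 𝓝[>] (0 : ℝ), R.h i * x ^ R.m i ≤ R.g i x) →
    (∀ x ∈ Ioo 0 a₀, lo x - c * x ^ e = 0) ∨ 0 < h
  monomial : ∀ j, 0 ≤ α j ∧ d j ≠ 0 ∧
    MonomialOn (fun q => S j (shear (R.σ i) (R.k i) (shear 1 (fun x => c * x ^ e) q)))
      (sliverSet a₀ (fun x => lo x - c * x ^ e) (fun x => hi x - c * x ^ e)) (α j) (β j) (d j) η'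

/-- The region between the graphs of `lo` and `hi` is divided into finitely many pieces by a chain
of intermediate graphs. -/
abbrev MonomialChain {ι : Type*} (S : ι → ℝ × ℝ → ℝ) {P : ℝ × ℝ → ℝ} {b η : ℝ}
    (R : TriangleResolution P b η) (i : Fin R.n) (η' a₀ : ℝ) : (ℝ → ℝ) → (ℝ → ℝ) → Prop :=
  Relation.ReflTransGen fun lo hi => Nonempty (MonomialPiece S R i η' a₀ lo hi)

lemma MonomialOn.mono {F : ℝ × ℝ → ℝ} {D D' : Set (ℝ × ℝ)} {α : ℚ} {β : ℕ} {d η : ℝ}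
    (h : MonomialOn F D α β d η) (hD : D' ⊆ D) : MonomialOn F D' α β d η :=
  fun p hp => h p (hD hp)

lemma axisRegion_subset {e ρ ρ' : ℝ} (h : ρ' ≤ ρ) : axisRegion e ρ' ⊆ axisRegion e ρ :=
  fun _ ⟨hx, hxρ, hy⟩ => ⟨hx, hxρ.trans_le h,
    hy.trans_le (mul_le_mul_of_nonneg_right h (Real.rpow_nonneg hx.le e))⟩

lemma vertexRegion_subset {e m ε ρ ρ' : ℝ} (h : ρ' ≤ ρ) :
    vertexRegion e m ε ρ' ⊆ vertexRegion e m ε ρ :=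
  fun _ ⟨hx, hxρ, hy, hyρ, hm⟩ => ⟨hx, hxρ.trans_le h, hy,
    hyρ.trans_le (mul_le_mul_of_nonneg_right h (Real.rpow_nonneg hx.le e)),
    hm.trans_le (mul_le_mul_of_nonneg_right h hy.le)⟩

lemma exists_pos_forall_of_antitone {ι : Type*} [Finite ι] {p : ι → ℝ → Prop}
    (hp : ∀ j, ∃ ρ > 0, p j ρ) (hanti : ∀ j ρ ρ', ρ' ≤ ρ → p j ρ → p j ρ') :
    ∃ ρ > 0, ∀ j, p j ρ := by
  have hall : ∀ᶠ ρ in 𝓝[>] (0 : ℝ), ∀ j, p j ρ := eventually_all.2 fun j => by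
    obtain ⟨ρ, hρ, h⟩ := hp j
    filter_upwards [Ioo_mem_nhdsGT hρ] with ρ' hρ'
    exact hanti j ρ ρ' hρ'.2.le h
  obtain ⟨ρ, h, hρ⟩ := (hall.and self_mem_nhdsWithin).exists
  exact ⟨ρ, hρ, h⟩

lemma eventually_forall_Ioo_nhdsGT {p : ℝ → Prop} (h : ∀ᶠ x in 𝓝[>] (0 : ℝ), p x) :
    ∀ᶠ a in 𝓝[>] (0 : ℝ), ∀ x ∈ Ioo 0 a, p x := by
  obtain ⟨ε, hε, hp⟩ := mem_nhdsGT_iff_exists_Ioo_subset.1 h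
  filter_upwards [Ioo_mem_nhdsGT (mem_Ioi.1 hε)] with a ha x hx
  exact hp ⟨hx.1, hx.2.trans ha.2⟩

/-! ### Pieces near curves and between them -/

/-- Near each of the curves `y = c x^e`, `c₁ ≤ c ≤ c₂`, every `S j` is comparable to a power of `x`
after the shift by `c x^e`; the size `ρ` of the neighborhood does not depend on `c`. -/
structure FaceNeighborhood {ι : Type*} (S : ι → ℝ × ℝ → ℝ) {P : ℝ × ℝ → ℝ} {b η : ℝ}
    (R : TriangleResolution P b η) (i : Fin R.n) (η' e c₁ c₂ ρ : ℝ) : Prop where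
  isShiftExponent : R.IsShiftExponent i e
  pos : 0 < ρ
  monomialOn : ∀ c ∈ Icc c₁ c₂, ∀ j, ∃ (α : ℚ) (d : ℝ), 0 ≤ α ∧ d ≠ 0 ∧
    MonomialOn (fun q => S j (shear (R.σ i) (R.k i) (shear 1 (fun x => c * x ^ e) q)))
      (axisRegion e ρ) α 0 d η'

/-- Between the curves `ρ y = ε x^m` and `y = ρ x^M`, every `S j` is comparable to a monomial
without a shift. -/
structure VertexNeighborhood {ι : Type*} (S : ι → ℝ × ℝ → ℝ) {P : ℝ × ℝ → ℝ} {b η : ℝ}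
    (R : TriangleResolution P b η) (i : Fin R.n) (η' ε m ρ : ℝ) : Prop where
  pos : 0 < ρ
  monomialOn : ∀ j, ∃ (α : ℚ) (β : ℕ) (d : ℝ), 0 ≤ α ∧ d ≠ 0 ∧
    MonomialOn (fun q => S j (shear (R.σ i) (R.k i) q)) (vertexRegion (R.M i) m ε ρ) α β d η'

section Neighborhoods

variable {ι : Type*} {S : ι → ℝ × ℝ → ℝ} {P : ℝ × ℝ → ℝ} {b η η' e c c₁ c₂ m ε ρ a₀ : ℝ}
  {R : TriangleResolution P b η} {i : Fin R.n} {lo hi : ℝ → ℝ}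

namespace FaceNeighborhood

lemma nonempty_monomialPiece (hN : FaceNeighborhood S R i η' e c₁ c₂ ρ) (ha : a₀ ≤ ρ) {H h m : ℝ}
    (hc : c ∈ Icc c₁ c₂) (hc0 : 0 ≤ c) (hlt : ∀ x ∈ Ioo 0 a₀, lo x < hi x)
    (hlo : PuiseuxOn R.N a₀ lo) (hhi : PuiseuxOn R.N a₀ hi)
    (hlo_lead : LeadingTerm (fun x => lo x - c * x ^ e) h m) (hhi_lead : LeadingTerm hi H e)
    (hem : e < m) (hh : 0 ≤ h) (hH : c < H)
    (hzero : (∀ x ∈ Ioo 0 R.a, R.g i x = 0) ∨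
        (∀ᶠ x in 𝓝[>] (0 : ℝ), R.h i * x ^ R.m i ≤ R.g i x) →
      (∀ x ∈ Ioo 0 a₀, lo x - c * x ^ e = 0) ∨ 0 < h)
    (hlower : ∀ x ∈ Ioo 0 a₀, (c - ρ) * x ^ e ≤ lo x)
    (hupper : ∀ x ∈ Ioo 0 a₀, hi x ≤ (c + ρ) * x ^ e) :
    Nonempty (MonomialPiece S R i η' a₀ lo hi) := by
  obtain ⟨ν, hν⟩ := hN.isShiftExponent.exists_nat
  choose α d hα hd hmon using hN.monomialOn c hc
  refine ⟨{ lt := hlt, c := c, e := e, H := H - c, M := e, h := h, m := m, α := α, β := 0, d := d,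
            c_nonneg := hc0, isShiftExponent := hN.isShiftExponent
            lo_puiseux := hlo.sub (.monomial hν c), hi_puiseux := hhi.sub (.monomial hν c)
            hi_lead := hhi_lead.sub (.monomial c e), lo_lead := hlo_lead
            one_le_M := hN.isShiftExponent.one_le, M_lt_m := hem, h_nonneg := hh
            H_pos := sub_pos.2 hH, lo_eq_or_h_pos := ?_
            monomial := fun j => ⟨hα j, hd j, (hmon j).mono ?_⟩ }⟩
  · rintro (⟨j, hj⟩ | h)
    · exact absurd hj (lt_irrefl 0)
    · exact hzero h
  · rintro q ⟨hx0, hxa, hqlo, hqhi⟩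
    have := hlower q.1 ⟨hx0, hxa⟩
    have := hupper q.1 ⟨hx0, hxa⟩
    exact ⟨hx0, hxa.trans_le ha, abs_lt.2 ⟨by linarith, by linarith⟩⟩

lemma nonempty_monomialPiece_of_monomial (hN : FaceNeighborhood S R i η' e c₁ c₂ ρ) (ha : a₀ ≤ ρ)
    {H : ℝ} (hc : c ∈ Icc c₁ c₂) (hc0 : 0 ≤ c) (hlt : ∀ x ∈ Ioo 0 a₀, c * x ^ e < hi x)
    (hhi : PuiseuxOn R.N a₀ hi) (hhi_lead : LeadingTerm hi H e) (hH : c < H)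
    (hupper : ∀ x ∈ Ioo 0 a₀, hi x ≤ (c + ρ) * x ^ e) :
    Nonempty (MonomialPiece S R i η' a₀ (fun x => c * x ^ e) hi) := by
  obtain ⟨ν, hν⟩ := hN.isShiftExponent.exists_nat
  refine hN.nonempty_monomialPiece ha hc hc0 hlt (.monomial hν c) hhi (h := 0) (m := e + 1) ?_
    hhi_lead (lt_add_one e) le_rfl hH (fun _ => Or.inl fun x _ => sub_self _) ?_ hupper
  · simpa only [sub_self] using LeadingTerm.zero (e + 1)
  · intro x hx
    exact mul_le_mul_of_nonneg_right (sub_le_self c hN.pos.le) (Real.rpow_nonneg hx.1.le e)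

lemma monomialChain (hN : FaceNeighborhood S R i η' e c₁ c₂ ρ) (ha : a₀ ≤ ρ) (h0 : 0 ≤ c₁)
    {c' : ℝ} (hc : c₁ ≤ c) (hcc' : c ≤ c') (hc' : c' ≤ c₂) :
    MonomialChain S R i η' a₀ (fun x => c * x ^ e) (fun x => c' * x ^ e) := by
  obtain ⟨ν, hν⟩ := hN.isShiftExponent.exists_nat
  obtain ⟨n, hn⟩ := exists_nat_ge ((c' - c) / ρ)
  rw [div_le_iff₀ hN.pos] at hn
  induction n generalizing c with
  | zero =>
    obtain rfl : c = c' := le_antisymm hcc' (by simpa using hn)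
    exact .refl
  | succ n ih =>
    rcases hcc'.eq_or_lt with rfl | hlt
    · exact .refl
    have hstep : c < min c' (c + ρ) := lt_min hlt (lt_add_of_pos_right c hN.pos)
    refine .head (hN.nonempty_monomialPiece_of_monomial ha ⟨hc, hcc'.trans hc'⟩ (h0.trans hc)
      ?_ (.monomial hν _) (.monomial _ e) hstep ?_)
      (ih (hc.trans hstep.le) (min_le_left c' (c + ρ)) ?_)
    · exact fun x hx => mul_lt_mul_of_pos_right hstep (Real.rpow_pos_of_pos hx.1 e)
    · exact fun x hx =>
        mul_le_mul_of_nonneg_right (min_le_right _ _) (Real.rpow_nonneg hx.1.le e)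
    · push_cast at hn
      rcases min_cases c' (c + ρ) with ⟨h, -⟩ | ⟨h, -⟩ <;> rw [h]
      · rw [sub_self]
        exact mul_nonneg n.cast_nonneg hN.pos.le
      · linarith

lemma eventually_monomialChain_G (hN : FaceNeighborhood S R i η' (R.M i) c₁ (R.H i) ρ)
    (hc₁ : 0 ≤ c₁) (hH : c₁ < R.H i) :
    ∀ᶠ a₀ in 𝓝[>] (0 : ℝ), MonomialChain S R i η' a₀ (fun x => c₁ * x ^ R.M i) (R.G i) := by
  set c := max c₁ (R.H i - ρ / 2)
  have hcH : c < R.H i := max_lt hH (sub_lt_self _ (half_pos hN.pos))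
  have hc : c₁ ≤ c := le_max_left _ _
  have hHρ : R.H i < c + ρ := by
    have := le_max_right c₁ (R.H i - ρ / 2)
    have := hN.pos
    linarith
  filter_upwards [Ioo_mem_nhdsGT hN.pos, Ioo_mem_nhdsGT R.a_pos,
    eventually_forall_Ioo_nhdsGT ((R.G_lead i).eventually_gt hcH),
    eventually_forall_Ioo_nhdsGT ((R.G_lead i).eventually_lt hHρ)] with a₀ haρ haR hlt hupper
  exact (hN.monomialChain haρ.2.le hc₁ le_rfl hc hcH.le).tail
    (hN.nonempty_monomialPiece_of_monomial haρ.2.le ⟨hc, hcH.le⟩ (hc₁.trans hc) hlt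
      ((R.G_puiseux i).mono haR.2.le) (R.G_lead i) hcH fun x hx => (hupper x hx).le)

end FaceNeighborhood

lemma TriangleResolution.exists_leadingTerm_g_sub (hg : ¬ ∀ x ∈ Ioo 0 R.a, R.g i x = 0) :
    ∃ h m, R.m i < m ∧ 0 ≤ h ∧ LeadingTerm (fun x => R.g i x - R.h i * x ^ R.m i) h m ∧
      ((∀ᶠ x in 𝓝[>] (0 : ℝ), R.h i * x ^ R.m i ≤ R.g i x) →
        (∀ᶠ x in 𝓝[>] (0 : ℝ), R.g i x - R.h i * x ^ R.m i = 0) ∨ 0 < h) := by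
  obtain ⟨ν, hν⟩ := IsShiftExponent.exists_nat (Or.inr ⟨rfl, hg⟩)
  obtain ⟨-, -, hlead⟩ := h_pos_and_leadingTerm_g hg
  have hdiff := hlead.sub (LeadingTerm.monomial (R.h i) (R.m i))
  rw [sub_self] at hdiff
  rcases ((R.g_puiseux i).sub (.monomial hν (R.h i))).eventually_eq_zero_or_leadingTerm
    R.N_pos.ne' R.a_pos with hzero | ⟨n, l, hl, hlead'⟩
  · exact ⟨0, R.m i + 1, lt_add_one _, le_rfl,
      (LeadingTerm.zero _).congr' (hzero.mono fun x hx => hx.symm), fun _ => Or.inl hzero⟩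
  · have hm := hdiff.exponent_lt hlead' hl
    rcases lt_or_gt_of_ne hl with hneg | hpos
    · refine ⟨0, (R.m i + n / R.N) / 2, by linarith, le_rfl, hlead'.of_lt (by linarith),
        fun hge => ?_⟩
      obtain ⟨x, hx_ge, hx_lt⟩ := (hge.and (hlead'.eventually_lt hneg)).exists
      rw [zero_mul] at hx_lt
      exact absurd hx_lt (sub_nonneg.2 hx_ge).not_gt
    · exact ⟨l, n / R.N, hm, hpos.le, hlead', fun _ => Or.inr hpos⟩

lemma FaceNeighborhood.eventually_monomialChain_g {K : ℝ}
    (hN : FaceNeighborhood S R i η' (R.m i) (R.h i) K ρ) (hK : R.h i < K)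
    (hg : ¬ ∀ x ∈ Ioo 0 R.a, R.g i x = 0) :
    ∀ᶠ a₀ in 𝓝[>] (0 : ℝ), MonomialChain S R i η' a₀ (R.g i) (fun x => K * x ^ R.m i) := by
  obtain ⟨ν, hν⟩ := hN.isShiftExponent.exists_nat
  obtain ⟨hh, -, hlead⟩ := TriangleResolution.h_pos_and_leadingTerm_g hg
  obtain ⟨h, m, hm, hh0, hdiff, hzero⟩ := TriangleResolution.exists_leadingTerm_g_sub hg
  set c := min K (R.h i + ρ)
  have hhc : R.h i < c := lt_min hK (lt_add_of_pos_right _ hN.pos)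
  have hzero' : ∀ᶠ a₀ in 𝓝[>] (0 : ℝ),
      (∀ᶠ x in 𝓝[>] (0 : ℝ), R.h i * x ^ R.m i ≤ R.g i x) →
        (∀ x ∈ Ioo 0 a₀, R.g i x - R.h i * x ^ R.m i = 0) ∨ 0 < h := by
    rw [eventually_imp_distrib_left]
    intro hge
    rcases hzero hge with heq | hpos
    · exact (eventually_forall_Ioo_nhdsGT heq).mono fun _ => Or.inl
    · exact Eventually.of_forall fun _ => Or.inr hpos
  filter_upwards [Ioo_mem_nhdsGT hN.pos, Ioo_mem_nhdsGT R.a_pos, hzero',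
    eventually_forall_Ioo_nhdsGT (hlead.eventually_lt hhc),
    eventually_forall_Ioo_nhdsGT (hlead.eventually_gt (sub_lt_self (R.h i) hN.pos))]
    with a₀ haρ haR hzero' hlt hlower
  exact .head (hN.nonempty_monomialPiece haρ.2.le ⟨le_rfl, hK.le⟩ hh.le hlt
      ((R.g_puiseux i).mono haR.2.le) (.monomial hν c) hdiff (.monomial c _) hm hh0 hhc
      (fun hor => hzero' (hor.resolve_left hg)) (fun x hx => (hlower x hx).le)
      fun x hx => mul_le_mul_of_nonneg_right (min_le_right _ _) (Real.rpow_nonneg hx.1.le _))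
    (hN.monomialChain haρ.2.le hh.le hhc.le (min_le_left _ _) le_rfl)

namespace VertexNeighborhood

lemma nonempty_monomialPiece (hV : VertexNeighborhood S R i η' ε m ρ) {δ h μ : ℝ} (hδ : 0 < δ)
    (hδρ : δ ≤ ρ) (ha : a₀ ≤ ρ) (hlt : ∀ x ∈ Ioo 0 a₀, lo x < δ * x ^ R.M i)
    (hlo : PuiseuxOn R.N a₀ lo) (hlead : LeadingTerm lo h μ) (hμ : R.M i < μ) (hh : 0 ≤ h)
    (hzero : (∀ x ∈ Ioo 0 a₀, lo x = 0) ∨ 0 < h)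
    (hlower : ∀ x ∈ Ioo 0 a₀, 0 ≤ lo x ∧ ε * x ^ m ≤ ρ * lo x) :
    Nonempty (MonomialPiece S R i η' a₀ lo fun x => δ * x ^ R.M i) := by
  have hM : R.IsShiftExponent i (R.M i) := Or.inl rfl
  obtain ⟨n, hn⟩ := hM.exists_nat
  choose α β d hα hd hmon using hV.monomialOn
  have hshear (q : ℝ × ℝ) : shear 1 (fun _ => 0) q = q := by simp [shear]
  refine ⟨{ lt := hlt, c := 0, e := R.M i, H := δ, M := R.M i, h := h, m := μ, α := α, β := β
            d := d, c_nonneg := le_rfl, isShiftExponent := hM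
            lo_puiseux := hlo.sub (.monomial hn 0)
            hi_puiseux := .sub (.monomial hn δ) (.monomial hn 0)
            hi_lead := by simpa only [zero_mul, sub_zero] using LeadingTerm.monomial δ (R.M i)
            lo_lead := by simpa only [zero_mul, sub_zero] using hlead
            one_le_M := R.one_le_M i, M_lt_m := hμ, h_nonneg := hh, H_pos := hδ
            lo_eq_or_h_pos := fun _ => by simpa only [zero_mul, sub_zero] using hzero
            monomial := fun j => ⟨hα j, hd j, ?_⟩ }⟩
  simp only [zero_mul, sub_zero, hshear]
  refine (hmon j).mono fun q ⟨hx0, hxa, hqlo, hqhi⟩ => ?_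
  obtain ⟨hlo0, hε⟩ := hlower q.1 ⟨hx0, hxa⟩
  exact ⟨hx0, hxa.trans_le ha, hlo0.trans_lt hqlo,
    hqhi.trans_le (mul_le_mul_of_nonneg_right hδρ (Real.rpow_nonneg hx0.le _)),
    hε.trans_lt (mul_lt_mul_of_pos_left hqlo hV.pos)⟩

lemma eventually_monomialChain_G (hV : VertexNeighborhood S R i η' ε m ρ)
    (hface : ∀ δ > 0, ∃ ρ', FaceNeighborhood S R i η' (R.M i) δ (R.H i) ρ') {h μ : ℝ}
    (hlo : PuiseuxOn R.N R.a lo) (hlead : LeadingTerm lo h μ) (hμ : R.M i < μ) (hh : 0 ≤ h)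
    (hzero : (∀ᶠ x in 𝓝[>] (0 : ℝ), lo x = 0) ∨ 0 < h)
    (hlower : ∀ᶠ x in 𝓝[>] (0 : ℝ), 0 ≤ lo x ∧ ε * x ^ m ≤ ρ * lo x) :
    ∀ᶠ a₀ in 𝓝[>] (0 : ℝ), MonomialChain S R i η' a₀ lo (R.G i) := by
  set δ := min ρ (R.H i / 2)
  have hδ : 0 < δ := lt_min hV.pos (half_pos (R.H_pos i))
  have hδH : δ < R.H i := (min_le_right _ _).trans_lt (half_lt_self (R.H_pos i))
  obtain ⟨ρ', hN⟩ := hface δ hδ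
  have hzero' : ∀ᶠ a₀ in 𝓝[>] (0 : ℝ), (∀ x ∈ Ioo 0 a₀, lo x = 0) ∨ 0 < h :=
    hzero.elim (fun heq => (eventually_forall_Ioo_nhdsGT heq).mono fun _ => Or.inl)
      fun hpos => Eventually.of_forall fun _ => Or.inr hpos
  filter_upwards [hN.eventually_monomialChain_G hδ.le hδH, Ioo_mem_nhdsGT hV.pos,
    Ioo_mem_nhdsGT R.a_pos, hzero', eventually_forall_Ioo_nhdsGT hlower,
    eventually_forall_Ioo_nhdsGT ((hlead.of_lt hμ).eventually_lt hδ)]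
    with a₀ hchain haρ haR hzero' hlower hlt
  exact .head (hV.nonempty_monomialPiece hδ (min_le_left _ _) haρ.2.le hlt (hlo.mono haR.2.le)
    hlead hμ hh hzero' hlower) hchain

end VertexNeighborhood

end Neighborhoods

/-! ### The pieces given by a common vertex of the Newton polygons -/

section Existence

variable {ι : Type*} {S : ι → ℝ × ℝ → ℝ} {P : ℝ × ℝ → ℝ} {b η η' e : ℝ} {B n ν : ℕ}

lemma exists_faceNeighborhood [Finite ι] {R : TriangleResolution P b η} {i : Fin R.n}
    (E : ∀ j, NewtonExpansion (R.pullback i (S j)) B) (hη' : 0 < η')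
    (he : R.IsShiftExponent i e) (hν : (R.N : ℝ) * e = ν)
    (hB : ∀ j, (E j).minWeight ν < ν * B) {c₁ c₂ : ℝ}
    (hface : ∀ j, ∀ c ∈ Icc c₁ c₂, ((E j).face ν).eval c ≠ 0) :
    ∃ ρ, FaceNeighborhood S R i η' e c₁ c₂ ρ := by
  obtain ⟨ρ, hρ, h⟩ := exists_pos_forall_of_antitone
    (fun j => (E j).exists_monomialOn_axisRegion (he.nat_ne_zero hν) R.N_pos.ne' hν (hB j)
      isCompact_Icc (hface j) hη' R.a_pos fun q h0 ha => R.comp_shear_eq_pullback i (S j) h0 ha)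
    fun j ρ ρ' hle h c hc => (h c hc).mono (axisRegion_subset hle)
  exact ⟨ρ, he, hρ, fun c hc j => ⟨_, _, by positivity, hface j c hc, h j c hc⟩⟩

lemma exists_vertexNeighborhood [Finite ι] {R : TriangleResolution P b η} {i : Fin R.n}
    (E : ∀ j, NewtonExpansion (R.pullback i (S j)) B) (hη' : 0 < η')
    (hn : (R.N : ℝ) * R.M i = n) {ε m : ℝ} (hm : (R.N : ℝ) * m = ν) (hε : 0 ≤ ε) {v : ι → ℕ}
    (hv : ∀ j, v j ∈ (E j).s) (hvn : ∀ j, (E j).o (v j) + n * v j = (E j).minWeight n)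
    (hB : ∀ j, (E j).minWeight n < n * B)
    (hlow : ∀ j, ∀ k ∈ (E j).s, k < v j →
      ε = 1 ∧ (E j).o (v j) + ν * v j ≤ (E j).o k + ν * k) :
    ∃ ρ, VertexNeighborhood S R i η' ε m ρ := by
  have hM : R.IsShiftExponent i (R.M i) := Or.inl rfl
  obtain ⟨ρ, hρ, h⟩ := exists_pos_forall_of_antitone
    (fun j => (E j).exists_monomialOn_vertexRegion (hM.nat_ne_zero hn) R.N_pos.ne' hn hm hε (hv j)
      (hvn j) (hB j) (hlow j) hη' R.a_pos
      fun q h0 ha => R.comp_shear_eq_pullback i (S j) h0 ha)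
    fun j ρ ρ' hle h => h.mono (vertexRegion_subset hle)
  exact ⟨ρ, hρ, fun j => ⟨_, _, _, by positivity, (E j).a_ne _ (hv j), h j⟩⟩

variable [Fintype ι] {R : TriangleResolution (fun p => ∏ j, S j p) b η} {i : Fin R.n}

lemma exists_lowerVertex_pullback (hS : ∀ j, AnalyticAt ℝ (S j) 0) (hη : η < 1)
    (hn : (R.N : ℝ) * R.M i = n) :
    ∃ (B : ℕ) (E : ∀ j, NewtonExpansion (R.pullback i (S j)) B) (v : ι → ℕ),
      NewtonExpansion.LowerVertex E n (R.H i) (R.β i) v := by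
  have hM : R.IsShiftExponent i (R.M i) := Or.inl rfl
  have hn0 := hM.nat_ne_zero hn
  obtain ⟨B, hB⟩ := exists_nat_gt ((R.N : ℝ) * R.α i + n * R.β i)
  obtain ⟨E⟩ := Classical.nonempty_pi.2 fun j =>
    nonempty_newtonExpansion (R.analyticAt_pullback i (hS j)) B
  obtain ⟨v, hv⟩ := NewtonExpansion.exists_lowerVertex (E := E) (R.d_ne i) hη hn0 (R.H_pos i)
    (hB.trans_le (le_mul_of_one_le_left B.cast_nonneg
      (Nat.one_le_cast.2 (Nat.one_le_iff_ne_zero.2 hn0))))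
    fun u hu => R.curveComparable_pullback i hn
      (((R.leadingTerm_g_zero_M i).eventually_lt hu.1).and ((R.G_lead i).eventually_gt hu.2))
  exact ⟨B, E, v, hv⟩

variable {E : ∀ j, NewtonExpansion (R.pullback i (S j)) B} {v : ι → ℕ}

namespace NewtonExpansion.LowerVertex

lemma exists_faceNeighborhood_M (hv : LowerVertex E n (R.H i) (R.β i) v) (hη' : 0 < η')
    (hn : (R.N : ℝ) * R.M i = n) {δ : ℝ} (hδ : 0 < δ) :
    ∃ ρ, FaceNeighborhood S R i η' (R.M i) δ (R.H i) ρ :=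
  exists_faceNeighborhood E hη' (Or.inl rfl) hn hv.minWeight_lt
    fun j c hc => hv.face_ne j c ⟨hδ.trans_le hc.1, hc.2⟩

/- In the weight `ν = n + o k + 1` a term of order `k < v j` would lie below the vertex. -/
lemma le_of_g_eq_zero (hv : LowerVertex E n (R.H i) (R.β i) v) (hη : η < 1)
    (hn : (R.N : ℝ) * R.M i = n) (hg : ∀ x ∈ Ioo 0 R.a, R.g i x = 0) {j : ι} {k : ℕ}
    (hk : k ∈ (E j).s) : v j ≤ k := by
  by_contra! hlt
  set ν := n + (E j).o k + 1
  have hN : (0 : ℝ) < R.N := Nat.cast_pos.2 R.N_pos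
  have hMν : R.M i < (ν : ℝ) / R.N := by
    rw [lt_div_iff₀ hN, mul_comm, hn]
    exact Nat.cast_lt.2 (by lia)
  have heq := (hv.isUpperVertex_of_larger_weight (ν := ν) (by lia) le_rfl (R.d_ne i) hη
    (fun u hu => R.curveComparable_pullback i (mul_div_cancel₀ _ hN.ne') (by
      filter_upwards [TriangleResolution.eventually_zero_eq_g hg,
        R.eventually_mul_rpow_lt_G i hMν u, self_mem_nhdsWithin] with x hgx hGx hx
      exact ⟨hgx ▸ mul_pos hu (Real.rpow_pos_of_pos hx _), hGx⟩)) j).1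
  have hmin := (E j).minWeight_le ν hk
  have hmul : ν * (k + 1) ≤ ν * v j := Nat.mul_le_mul_left ν hlt
  rw [mul_add] at hmul
  lia

lemma eventually_monomialChain_of_g_eq_zero (hv : LowerVertex E n (R.H i) (R.β i) v) (hη : η < 1)
    (hη' : 0 < η') (hn : (R.N : ℝ) * R.M i = n) (hg : ∀ x ∈ Ioo 0 R.a, R.g i x = 0) :
    ∀ᶠ a₀ in 𝓝[>] (0 : ℝ), MonomialChain S R i η' a₀ (R.g i) (R.G i) := by
  obtain ⟨ρ, hV⟩ := exists_vertexNeighborhood E hη' hn (ε := 0) (m := 0) (ν := 0) (by simp) le_rfl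
    hv.mem hv.weight_eq hv.minWeight_lt
    fun j k hk hlt => absurd hlt (hv.le_of_g_eq_zero hη hn hg hk).not_gt
  have hg0 := TriangleResolution.eventually_zero_eq_g hg
  exact hV.eventually_monomialChain_G (fun δ hδ => hv.exists_faceNeighborhood_M hη' hn hδ)
    (R.g_puiseux i) ((LeadingTerm.zero (R.M i + 1)).congr' hg0) (lt_add_one _) le_rfl
    (Or.inl (hg0.mono fun x hx => hx.symm)) (hg0.mono fun x hx => by simp [← hx])

lemma eventually_monomialChain_of_g_ne_zero (hv : LowerVertex E n (R.H i) (R.β i) v) (hη : η < 1)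
    (hη' : 0 < η') (hn : (R.N : ℝ) * R.M i = n) (hg : ¬ ∀ x ∈ Ioo 0 R.a, R.g i x = 0) :
    ∀ᶠ a₀ in 𝓝[>] (0 : ℝ), MonomialChain S R i η' a₀ (R.g i) (R.G i) := by
  obtain ⟨hh, hMm, hlead⟩ := TriangleResolution.h_pos_and_leadingTerm_g hg
  have hm : R.IsShiftExponent i (R.m i) := Or.inr ⟨rfl, hg⟩
  obtain ⟨ν, hν⟩ := hm.exists_nat
  have hnν : n < ν := by
    have hlt := mul_lt_mul_of_pos_left hMm (Nat.cast_pos (α := ℝ).2 R.N_pos)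
    rwa [hn, hν, Nat.cast_lt] at hlt
  have hvertex := hv.isUpperVertex_of_larger_weight hnν hh.le (R.d_ne i) hη fun u hu =>
    R.curveComparable_pullback i hν
      ((hlead.eventually_lt hu).and (R.eventually_mul_rpow_lt_G i hMm u))
  obtain ⟨ρ, hV⟩ := exists_vertexNeighborhood E hη' hn hν zero_le_one hv.mem hv.weight_eq
    hv.minWeight_lt fun j k hk _ => ⟨rfl, (hvertex j).1.trans_le ((E j).minWeight_le ν hk)⟩
  set K := max ρ⁻¹ (R.h i + 1)
  have hhK : R.h i < K := (lt_add_one _).trans_le (le_max_right _ _)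
  have hρK : 1 ≤ ρ * K := (inv_le_iff_one_le_mul₀' hV.pos).1 (le_max_left _ _)
  obtain ⟨ρ', hN⟩ := exists_faceNeighborhood E hη' hm hν (hv.minWeight_lt_of_lt hnν)
    fun j c (hc : c ∈ Icc (R.h i) K) => (hvertex j).2 c hc.1 (hh.trans_le hc.1)
  have hchain := hV.eventually_monomialChain_G
    (fun δ hδ => hv.exists_faceNeighborhood_M hη' hn hδ) (.monomial hν K) (.monomial K _) hMm
    (hh.trans hhK).le (Or.inr (hh.trans hhK)) (by
      filter_upwards [self_mem_nhdsWithin] with x hx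
      have hpos := Real.rpow_pos_of_pos hx (R.m i)
      rw [← mul_assoc]
      exact ⟨(mul_pos (hh.trans hhK) hpos).le, mul_le_mul_of_nonneg_right hρK hpos.le⟩)
  exact (hN.eventually_monomialChain_g hhK hg).and hchain |>.mono fun _ h => h.1.trans h.2

end NewtonExpansion.LowerVertex

lemma eventually_monomialChain (hS : ∀ j, AnalyticAt ℝ (S j) 0) (hη : η < 1) (hη' : 0 < η')
    (R : TriangleResolution (fun p => ∏ j, S j p) b η) (i : Fin R.n) :
    ∀ᶠ a₀ in 𝓝[>] (0 : ℝ), MonomialChain S R i η' a₀ (R.g i) (R.G i) := by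
  have hM : R.IsShiftExponent i (R.M i) := Or.inl rfl
  obtain ⟨n, hn⟩ := hM.exists_nat
  obtain ⟨B, E, v, hv⟩ := exists_lowerVertex_pullback hS hη hn
  by_cases hg : ∀ x ∈ Ioo 0 R.a, R.g i x = 0
  · exact hv.eventually_monomialChain_of_g_eq_zero hη hη' hn hg
  · exact hv.eventually_monomialChain_of_g_ne_zero hη hη' hn hg

end Existence

theorem simultaneous_resolution
    (r : ℕ) (S : Fin r → ℝ × ℝ → ℝ)
    (hSa : ∀ j, AnalyticAt ℝ (S j) 0) (hS0 : ∀ j, S j 0 = 0)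
    (hSnz : ∀ j, ¬ (∀ᶠ p in 𝓝 (0 : ℝ × ℝ), S j p = 0))
    (b : ℝ) (hb : 0 < b) (η : ℝ) (hη : 0 < η) (hη1 : η < 1)
    (R : TriangleResolution (fun p => ∏ j, S j p) b η)
    (η' : ℝ) (hη' : 0 < η') :
    ∃ a₀ : ℝ, 0 < a₀ ∧ a₀ ≤ R.a ∧ ∀ i : Fin R.n,
      ∃ (L : ℕ) (c e : Fin L → ℝ) (g G : Fin L → ℝ → ℝ) (H M h m : Fin L → ℝ)
        (α : Fin L → Fin r → ℚ) (β : Fin L → Fin r → ℕ) (d : Fin L → Fin r → ℝ),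
        -- the pieces, in the coordinates of `D_i'`, divide the part `x < a₀` of `D_i'`
        (∀ l, shear 1 (fun x => c l * x ^ e l) '' sliverSet a₀ (g l) (G l) ⊆
          sliverSet a₀ (R.g i) (R.G i)) ∧
        (Pairwise fun l l' =>
          Disjoint (shear 1 (fun x => c l * x ^ e l) '' sliverSet a₀ (g l) (G l))
            (shear 1 (fun x => c l' * x ^ e l') '' sliverSet a₀ (g l') (G l'))) ∧
        sliverSet a₀ (R.g i) (R.G i) ⊆
          (⋃ l, closure (shear 1 (fun x => c l * x ^ e l) '' sliverSet a₀ (g l) (G l))) ∧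
        ∀ l : Fin L,
          -- the additional coordinate change `(x, y) ↦ (x, y - c x^e)`, `e = M_i` or `e = m_i`
          0 ≤ c l ∧
          (e l = R.M i ∨ (e l = R.m i ∧ ¬ ∀ x ∈ Ioo 0 R.a, R.g i x = 0)) ∧
          -- the form of the new domain
          PuiseuxOn R.N a₀ (g l) ∧ PuiseuxOn R.N a₀ (G l) ∧
          LeadingTerm (G l) (H l) (M l) ∧ LeadingTerm (g l) (h l) (m l) ∧
          1 ≤ M l ∧ M l < m l ∧ 0 ≤ h l ∧ 0 < H l ∧
          ((∃ j, 0 < β l j) ∨ (∀ x ∈ Ioo 0 R.a, R.g i x = 0) ∨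
              (∀ᶠ x in 𝓝[>] (0 : ℝ), R.h i * x ^ R.m i ≤ R.g i x) →
            (∀ x ∈ Ioo 0 a₀, g l x = 0) ∨ 0 < h l) ∧
          -- every `S_j` is comparable to a monomial in the new coordinates
          ∀ j : Fin r, 0 ≤ α l j ∧ d l j ≠ 0 ∧
            MonomialOn
              (fun q => S j (shear (R.σ i) (R.k i) (shear 1 (fun x => c l * x ^ e l) q)))
              (sliverSet a₀ (g l) (G l)) (α l j) (β l j) (d l j) η' := by
  obtain ⟨a₀, hchain, ha⟩ := ((eventually_all.2 (eventually_monomialChain hSa hη1 hη' R)).and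
    (Ioo_mem_nhdsGT R.a_pos)).exists
  refine ⟨a₀, ha.1, ha.2.le, fun i => ?_⟩
  obtain ⟨L, φ, h0, hL, hφ⟩ := exists_fin_seq_of_reflTransGen (hchain i)
  obtain ⟨piece⟩ := Classical.nonempty_pi.2 hφ
  have hlt (l : Fin L) := (piece l).lt
  have hsub := sliverSet_subset_of_boundaries hlt
  have hcover := sliverSet_subset_iUnion_closure hlt
  rw [h0, hL] at hsub hcover
  refine ⟨L, fun l => (piece l).c, fun l => (piece l).e,
    fun l x => φ l.castSucc x - (piece l).c * x ^ (piece l).e,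
    fun l x => φ l.succ x - (piece l).c * x ^ (piece l).e,
    fun l => (piece l).H, fun l => (piece l).M, fun l => (piece l).h, fun l => (piece l).m,
    fun l => (piece l).α, fun l => (piece l).β, fun l => (piece l).d, ?_⟩
  simp only [shear_image_sliverSet]
  exact ⟨hsub, pairwise_disjoint_sliverSet hlt, hcover, fun l =>
    ⟨(piece l).c_nonneg, (piece l).isShiftExponent, (piece l).lo_puiseux, (piece l).hi_puiseux,
      (piece l).hi_lead, (piece l).lo_lead, (piece l).one_le_M, (piece l).M_lt_m,
      (piece l).h_nonneg, (piece l).H_pos, (piece l).lo_eq_or_h_pos, (piece l).monomial⟩⟩
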